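/- arXiv:2003.10408 — 11 statements merged into one kernel-verified Lean document; each statement's English description precedes it below -/
import Mathlib

section
/- Let $V$ be a countable set, let every $v \in V$ have a finite list $L(v)$ of colours with $|L(v)| = \ell + 1$, and let $\mathcal{X}$ be a countable (possibly finite) collection of infinite subsets of $V$. Then there is a choice of sublists $L'(v) \subseteq L(v)$ with $|L'(v)| = \ell$ for every $v \in V$, such that for every colour $c$ and every set $X \in \mathcal{X}$, the set of $v \in X$ with $c \notin L'(v)$ is infinite. -/
/-!
Removing one colour from each list is the only freedom there is, and one removal settles one
requirement: "the vertex `v` misses the colour `c`". Colours outside `⋃ v, L v` are missed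
everywhere, so countably many triples `(X, c, n)` with `X ∈ 𝒳`, `c ∈ ⋃ v, L v` and `n : ℕ` matter.
As each `X` is infinite, these triples have distinct representatives `f (X, c, n) ∈ X`
(`exists_injective_mem_of_infinite`). Delete `c` from the list of `f (X, c, n)` if it is there, and
an arbitrary colour otherwise: then the infinitely many vertices `f (X, c, n)`, `n : ℕ`, all miss
`c`.
-/

/-- Countably many infinite subsets of a countable set have a system of distinct representatives:
along an enumeration of `V`, each representative is chosen beyond the previous one. -/
theorem exists_injective_mem_of_infinite {V ι : Type*} [Countable V] [Countable ι]
    (S : ι → Set V) (hS : ∀ i, (S i).Infinite) :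
    ∃ f : ι → V, Function.Injective f ∧ ∀ i, f i ∈ S i := by
  rcases isEmpty_or_nonempty ι with _ | _
  · exact ⟨isEmptyElim, Function.injective_of_subsingleton _, isEmptyElim⟩
  obtain ⟨e, he⟩ := exists_injective_nat V
  obtain ⟨p, hp⟩ := exists_surjective_nat ι
  have key : ∀ n m : ℕ, ∃ v ∈ S (p n), m < e v := fun n m => by
    obtain ⟨_, ⟨v, hv, rfl⟩, hlt⟩ := ((hS (p n)).image he.injOn).exists_gt m
    exact ⟨v, hv, hlt⟩
  choose g hg hlt using key
  let F : ℕ → V := fun n => Nat.rec (g 0 0) (fun k v => g (k + 1) (e v)) n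
  have hmono : StrictMono (e ∘ F) := strictMono_nat_of_lt_succ fun n => hlt (n + 1) (e (F n))
  have hmem : ∀ n, F n ∈ S (p n) := by
    rintro (_ | n)
    · exact hg 0 0
    · exact hg (n + 1) (e (F n))
  refine ⟨F ∘ Function.surjInv hp,
    hmono.injective.of_comp.comp (Function.injective_surjInv hp), fun i => ?_⟩
  simpa [Function.surjInv_eq hp i] using hmem (Function.surjInv hp i)

/-- Lemma 2.1 (restrict): for a countable set `V`, lists of size `ℓ + 1`, and a countable
collection `𝒳` of infinite subsets of `V`, one can choose sublists of size `ℓ` so that for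
every colour `c` and every `X ∈ 𝒳`, infinitely many `v ∈ X` have `c ∉ L' v`. -/
theorem restrict_sublists {V C : Type*} [Countable V] (ℓ : ℕ) (hℓ : 1 ≤ ℓ)
    (L : V → Finset C) (hL : ∀ v, (L v).card = ℓ + 1)
    (𝒳 : Set (Set V)) (h𝒳 : 𝒳.Countable) (hinf : ∀ X ∈ 𝒳, X.Infinite) :
    ∃ L' : V → Finset C, (∀ v, L' v ⊆ L v) ∧ (∀ v, (L' v).card = ℓ) ∧
      ∀ (c : C), ∀ X ∈ 𝒳, {v ∈ X | c ∉ L' v}.Infinite := by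
  classical
  let D : Set C := ⋃ v, (L v : Set C)
  have hD : D.Countable := Set.countable_iUnion fun v => (L v).countable_toSet
  have := hD.to_subtype
  have := h𝒳.to_subtype
  obtain ⟨f, hf, hfmem⟩ := exists_injective_mem_of_infinite
    (fun i : 𝒳 × D × ℕ => (i.1 : Set V)) (fun i => hinf _ i.1.2)
  -- `r v` is the colour deleted at `v`; by injectivity of `f` each vertex serves one triple only.
  have hr : ∀ v, ∃ a ∈ L v, ∀ i, f i = v → (i.2.1 : C) ∈ L v → a = i.2.1 := fun v => by
    by_cases h : ∃ i, f i = v ∧ (i.2.1 : C) ∈ L v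
    · obtain ⟨i, rfl, hi⟩ := h
      exact ⟨i.2.1, hi, fun j hj _ => by rw [hf hj]⟩
    · obtain ⟨a, ha⟩ : (L v).Nonempty := Finset.card_pos.1 (by rw [hL]; omega)
      exact ⟨a, ha, fun i hi hi' => (h ⟨i, hi, hi'⟩).elim⟩
  choose r hrL hr using hr
  refine ⟨fun v => (L v).erase (r v), fun v => Finset.erase_subset _ _, fun v => ?_,
    fun c X hX => ?_⟩
  · rw [Finset.card_erase_of_mem (hrL v), hL, Nat.add_sub_cancel]
  by_cases hc : c ∈ D
  · let t : ℕ → 𝒳 × D × ℕ := fun n => (⟨X, hX⟩, ⟨c, hc⟩, n)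
    have ht : Function.Injective t := fun m n h => congrArg (fun i => i.2.2) h
    refine Set.infinite_of_injective_forall_mem (hf.comp ht) fun n => ⟨hfmem (t n), fun h => ?_⟩
    obtain ⟨hne, hmem⟩ := Finset.mem_erase.1 h
    exact hne (hr _ (t n) rfl hmem).symm
  · refine (hinf X hX).mono fun v hv => ⟨hv, fun h => hc ?_⟩
    exact Set.mem_iUnion.2 ⟨v, Finset.mem_of_mem_erase h⟩
end

section
/- Every countable simple graph is majority $3$-choosable: for every assignment to each vertex $v$ of a list $L(v)$ of $3$ colours, there exists a colouring $\chi$ with $\chi(v) \in L(v)$ for every vertex $v$ that is a majority colouring. -/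
/-!
A vertex of infinite degree only needs infinitely many neighbours of a different colour, and this is
arranged before the vertices of finite degree are coloured.

Index the (countably many) requirements "the `n`-th private neighbour of `v`", for `v` of infinite
degree and `n : ℕ`. Choosing representatives one at a time gives every vertex `v` of infinite
degree an infinite set of neighbours that come after `v` in a fixed enumeration of the vertices,
and these sets are pairwise disjoint (`exists_injective_mem`). Thus every vertex `w` has at most
one "parent" `v`, and parents come earlier in the enumeration, so a colouring from the lists in
which no vertex receives the colour of its parent can be built recursively
(`exists_coloring_ne_parent`). The colours of the vertices of infinite degree are now kept, and
each of them has infinitely many neighbours that avoid its colour no matter what happens next,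
provided every vertex `w` of finite degree deletes the colour of its parent from its list.

After this deletion, the vertices of finite degree still have at least two colours each. On a
finite set `T` of them, a colouring with the fewest monochromatic edges meeting `T` is a majority
colouring at each vertex of `T`, since otherwise swapping one vertex to its second colour would
decrease that number (`exists_majority_on_finite`). Rado's selection principle passes from finite
sets to all vertices of finite degree (`exists_majority_of_finite_degree`).
-/

/-- A countable family of infinite sets has a system of distinct representatives. -/
theorem exists_injective_mem {ι V : Type*} [Countable ι] (A : ι → Set V)
    (hA : ∀ i, (A i).Infinite) : ∃ f : ι → V, Function.Injective f ∧ ∀ i, f i ∈ A i := by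
  classical
  obtain ⟨e, he⟩ := exists_injective_nat ι
  have hfin (i : ι) : Finite {j // e j < e i} :=
    Finite.of_injective (fun j => (⟨e j.1, j.2⟩ : Fin (e i))) fun a b h =>
      Subtype.ext (he (by simpa using h))
  have step (i : ι) (g : ∀ j, e j < e i → V) : ∃ x, x ∈ A i ∧ ∀ j h, x ≠ g j h := by
    obtain ⟨x, hx, hx'⟩ := (hA i).exists_notMem_finite
      (Set.finite_range fun j : {j // e j < e i} => g j.1 j.2)
    exact ⟨x, hx, fun j h hxj => hx' ⟨⟨j, h⟩, hxj.symm⟩⟩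
  choose F hF hF' using step
  let wf : WellFounded (fun i j : ι => e i < e j) := (measure e).wf
  let f : ι → V := wf.fix F
  have hf (i : ι) : f i = F i fun j _ => f j := wf.fix_eq F i
  have hne (i j : ι) (h : e j < e i) : f i ≠ f j := by
    rw [hf i]
    exact hF' i _ j h
  refine ⟨f, fun i j hij => ?_, fun i => hf i ▸ hF i _⟩
  by_contra hne'
  rcases lt_or_gt_of_ne (fun h => hne' (he h)) with h | h
  · exact hne j i h hij.symm
  · exact hne i j h hij

/-- If each vertex `w` has at most one parent `v` (written `P v w`) and parents have smaller rank,
then lists of size at least two admit a colouring in which vertices differ from their parents. -/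
theorem exists_coloring_ne_parent {V C : Type*} (L : V → Finset C) (hL : ∀ v, 2 ≤ (L v).card)
    (e : V → ℕ) (P : V → V → Prop) (hP : ∀ v v' w, P v w → P v' w → v = v')
    (he : ∀ v w, P v w → e v < e w) :
    ∃ c : V → C, (∀ w, c w ∈ L w) ∧ ∀ v w, P v w → c w ≠ c v := by
  classical
  have step (w : V) (g : ∀ v, e v < e w → C) :
      ∃ x, x ∈ L w ∧ ∀ v h, P v w → x ≠ g v h := by
    by_cases hw : ∃ v, P v w
    · obtain ⟨v, hv⟩ := hw
      obtain ⟨x, hx, hx'⟩ := Finset.exists_mem_ne (hL w) (g v (he v w hv))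
      refine ⟨x, hx, fun v' h hv' => ?_⟩
      obtain rfl := hP v v' w hv hv'
      exact hx'
    · obtain ⟨x, hx⟩ := Finset.card_pos.1 (zero_lt_two.trans_le (hL w))
      exact ⟨x, hx, fun v _ hv => (hw ⟨v, hv⟩).elim⟩
  choose F hF hF' using step
  let wf : WellFounded (fun i j : V => e i < e j) := (measure e).wf
  let c : V → C := wf.fix F
  have hc (w : V) : c w = F w fun v _ => c v := wf.fix_eq F w
  refine ⟨c, fun w => hc w ▸ hF w _, fun v w hvw => ?_⟩
  rw [hc w]
  exact hF' w _ v (he v w hvw) hvw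

/-- Local optimisation: a colouring with the fewest monochromatic edges meeting the finite set `T`
is a majority colouring at each vertex of `T`. -/
theorem exists_majority_on_finite {V C : Type*} (G : SimpleGraph V) (M : V → Finset C)
    (hM : ∀ v, (M v).Nonempty) (T : Set V) (hT : T.Finite)
    (hdeg : ∀ v ∈ T, (G.neighborSet v).Finite) (hT2 : ∀ v ∈ T, 2 ≤ (M v).card) :
    ∃ χ : V → C, (∀ v, χ v ∈ M v) ∧ ∀ v ∈ T,
      {u | G.Adj v u ∧ χ u = χ v}.ncard ≤ {u | G.Adj v u ∧ χ u ≠ χ v}.ncard := by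
  classical
  let E : Set (Sym2 V) := {z | z ∈ G.edgeSet ∧ ∃ v ∈ T, v ∈ z}
  have hE : E.Finite := by
    refine (hT.biUnion fun v hv => (hdeg v hv).image fun u => s(v, u)).subset ?_
    rintro z ⟨hz, v, hv, hvz⟩
    obtain ⟨u, rfl⟩ := Sym2.mem_iff_exists.1 hvz
    exact Set.mem_biUnion hv ⟨u, by simpa using hz, rfl⟩
  let Φ : (V → C) → ℕ := fun χ => {z | z ∈ E ∧ (Sym2.map χ z).IsDiag}.ncard
  let S : Set (V → C) := {χ | ∀ v, χ v ∈ M v}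
  have hS : S.Nonempty := ⟨fun v => (hM v).choose, fun v => (hM v).choose_spec⟩
  let χ := Function.argminOn Φ S hS
  have hχ : χ ∈ S := Function.argminOn_mem Φ S hS
  have hmin (ψ) (hψ : ψ ∈ S) : Φ χ ≤ Φ ψ := Function.argminOn_le Φ S hψ
  refine ⟨χ, hχ, fun v hv => ?_⟩
  -- In the count below, the edges at `v` contribute the number of neighbours of `v` sharing its colour.
  have hinj : Function.Injective fun u => s(v, u) := fun a b h => Sym2.congr_right.1 h
  have key (ψ : V → C) : Φ ψ = {u | G.Adj v u ∧ ψ u = ψ v}.ncard +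
      {z | (z ∈ E ∧ (Sym2.map ψ z).IsDiag) ∧ v ∉ z}.ncard := by
    have h1 : {z | z ∈ E ∧ (Sym2.map ψ z).IsDiag} =
        (fun u => s(v, u)) '' {u | G.Adj v u ∧ ψ u = ψ v} ∪
          {z | (z ∈ E ∧ (Sym2.map ψ z).IsDiag) ∧ v ∉ z} := by
      ext z
      by_cases hz : v ∈ z
      · obtain ⟨u, rfl⟩ := Sym2.mem_iff_exists.1 hz
        have hT' : ∃ a ∈ T, a ∈ s(v, u) := ⟨v, hv, hz⟩
        constructor
        · rintro ⟨⟨h1, _⟩, h2⟩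
          exact .inl ⟨u, ⟨h1, Eq.symm h2⟩, rfl⟩
        · rintro (⟨x, ⟨h1, h2⟩, hx⟩ | h)
          · obtain rfl := hinj hx
            exact ⟨⟨h1, hT'⟩, Eq.symm h2⟩
          · exact (h.2 hz).elim
      · have : ∀ u, s(v, u) ≠ z := by
          rintro u rfl
          simp at hz
        simp [hz, this]
    rw [← Set.ncard_image_of_injective _ hinj, ← Set.ncard_union_eq ?_ ?_ ?_, ← h1]
    · rw [Set.disjoint_left]
      rintro _ ⟨u, _, rfl⟩ ⟨_, h⟩
      simp at h
    · exact ((hdeg v hv).subset fun u hu => hu.1).image _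
    · exact hE.subset fun z hz => hz.1.1
  obtain ⟨b, hb, hbv⟩ := Finset.exists_mem_ne (hT2 v hv) (χ v)
  let ψ := Function.update χ v b
  have hψ : ψ ∈ S := by
    intro w
    by_cases hw : w = v
    · subst hw
      simpa [ψ] using hb
    · simpa [ψ, hw] using hχ w
  have hle := hmin ψ hψ
  rw [key χ, key ψ] at hle
  have hrest : {z | (z ∈ E ∧ (Sym2.map ψ z).IsDiag) ∧ v ∉ z} =
      {z | (z ∈ E ∧ (Sym2.map χ z).IsDiag) ∧ v ∉ z} := by
    ext z
    have : v ∉ z → Sym2.map ψ z = Sym2.map χ z := fun hz =>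
      Sym2.map_congr fun x hx => Function.update_of_ne (by rintro rfl; exact hz hx) _ _
    simp only [Set.mem_ofPred_eq]
    constructor <;> rintro ⟨⟨h1, h2⟩, h3⟩ <;> simp_all
  rw [hrest, Nat.add_le_add_iff_right] at hle
  refine hle.trans (Set.ncard_le_ncard ?_ ((hdeg v hv).subset fun u hu => hu.1))
  rintro u ⟨hu, hub⟩
  have huv : u ≠ v := hu.ne'
  simp only [ψ, Function.update_of_ne huv, Function.update_self] at hub
  exact ⟨hu, hub ▸ hbv⟩

/-- Compactness: lists with at least two colours at the vertices of finite degree (a single colour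
is allowed elsewhere) admit a colouring that is a majority colouring at those vertices. -/
theorem exists_majority_of_finite_degree {V C : Type*} (G : SimpleGraph V) (M : V → Finset C)
    (hM : ∀ v, (M v).Nonempty) (hM2 : ∀ v, (G.neighborSet v).Finite → 2 ≤ (M v).card) :
    ∃ χ : V → C, (∀ v, χ v ∈ M v) ∧ ∀ v, (G.neighborSet v).Finite →
      {u | G.Adj v u ∧ χ u = χ v}.ncard ≤ {u | G.Adj v u ∧ χ u ≠ χ v}.ncard := by
  classical
  have hloc (s : Finset V) := exists_majority_on_finite G M hM
    {v | v ∈ s ∧ (G.neighborSet v).Finite} (s.finite_toSet.subset fun v hv => hv.1)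
    (fun v hv => hv.2) (fun v hv => hM2 v hv.2)
  choose g hg hmaj using hloc
  obtain ⟨χ, hχ⟩ := Finset.rado_selection (β := fun v => {x // x ∈ M v})
    fun s v => ⟨g s v, hg s v⟩
  refine ⟨fun v => χ v, fun v => (χ v).2, fun v hv => ?_⟩
  obtain ⟨t, hst, ht⟩ := hχ (insert v hv.toFinset)
  have hval (u) (hu : u ∈ insert v hv.toFinset) : (χ u : C) = g t u := by rw [ht u hu]
  have hv' := hval v (Finset.mem_insert_self _ _)
  have hu' (u) (hu : G.Adj v u) : (χ u : C) = g t u :=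
    hval u (Finset.mem_insert_of_mem (by simpa using hu))
  have h := hmaj t v ⟨hst (Finset.mem_insert_self _ _), hv⟩
  have e1 : {u | G.Adj v u ∧ (χ u : C) = χ v} = {u | G.Adj v u ∧ g t u = g t v} := by
    ext u
    exact and_congr_right fun hu => by rw [hu' u hu, hv']
  have e2 : {u | G.Adj v u ∧ (χ u : C) ≠ χ v} = {u | G.Adj v u ∧ g t u ≠ g t v} := by
    ext u
    exact and_congr_right fun hu => by rw [hu' u hu, hv']
  rwa [e1, e2]

/-- Theorem 2.2: every countable graph is majority 3-choosable. -/
theorem countable_majority_three_choosable {V C : Type*} [Countable V] (G : SimpleGraph V)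
    (L : V → Finset C) (hL : ∀ v, (L v).card = 3) :
    ∃ χ : V → C, (∀ v, χ v ∈ L v) ∧
      ∀ v, Cardinal.mk {u | G.Adj v u ∧ χ u = χ v} ≤
        Cardinal.mk {u | G.Adj v u ∧ χ u ≠ χ v} := by
  classical
  obtain ⟨e, he⟩ := exists_injective_nat V
  let I := {v : V // (G.neighborSet v).Infinite}
  -- Only finitely many neighbours of `v` precede it in the enumeration `e`.
  have hA (i : I × ℕ) : {u | G.Adj i.1.1 u ∧ e i.1.1 < e u}.Infinite := by
    have hlow : {u | e u ≤ e i.1.1}.Finite :=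
      (Set.finite_Iic (e i.1.1)).preimage he.injOn
    refine (i.1.2.sdiff hlow).mono fun u hu => ⟨hu.1, not_le.1 hu.2⟩
  obtain ⟨f, hf, hfA⟩ := exists_injective_mem _ hA
  let P : V → V → Prop := fun v w => ∃ (hv : (G.neighborSet v).Infinite) (n : ℕ), f (⟨v, hv⟩, n) = w
  have hP (v v' w) (h : P v w) (h' : P v' w) : v = v' := by
    obtain ⟨hv, n, h⟩ := h
    obtain ⟨hv', n', h'⟩ := h'
    have := hf (h.trans h'.symm)
    exact congrArg (fun i => i.1.1) this
  have hPe (v w) (h : P v w) : e v < e w := by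
    obtain ⟨hv, n, rfl⟩ := h
    exact (hfA (⟨v, hv⟩, n)).2
  obtain ⟨c, hcL, hcP⟩ := exists_coloring_ne_parent L (fun v => by rw [hL]; norm_num) e P hP hPe
  -- Colours are fixed at infinite degree; elsewhere the colour of the parent is deleted.
  let M : V → Finset C := fun w =>
    if (G.neighborSet w).Infinite then {c w} else (L w).filter fun x => ∀ v, P v w → x ≠ c v
  have hM2 (w) (hw : (G.neighborSet w).Finite) : 2 ≤ (M w).card := by
    have hMw : M w = (L w).filter fun x => ∀ v, P v w → x ≠ c v := if_neg (not_not.2 hw)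
    rw [hMw]
    by_cases h : ∃ v, P v w
    · obtain ⟨v, hv⟩ := h
      have hsub : (L w).erase (c v) ⊆ (L w).filter fun x => ∀ v, P v w → x ≠ c v := by
        intro x hx
        rw [Finset.mem_erase] at hx
        refine Finset.mem_filter.2 ⟨hx.2, fun v' hv' => ?_⟩
        rw [← hP v v' w hv hv']
        exact hx.1
      have h1 := Finset.card_le_card hsub
      have h2 := Finset.pred_card_le_card_erase (s := L w) (a := c v)
      have h3 := hL w
      omega
    · rw [Finset.filter_true_of_mem fun x _ v hv => (h ⟨v, hv⟩).elim, hL]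
      norm_num
  have hM (w) : (M w).Nonempty := by
    by_cases hw : (G.neighborSet w).Infinite
    · simp [M, hw]
    · exact Finset.card_pos.1 (zero_lt_two.trans_le (hM2 w (not_not.1 hw)))
  obtain ⟨χ, hχM, hχ⟩ := exists_majority_of_finite_degree G M hM hM2
  have hinf (v) (hv : (G.neighborSet v).Infinite) : χ v = c v := by
    have := hχM v
    simpa [M, hv] using this
  have hpar (v w) (h : P v w) : χ w ≠ χ v := by
    rw [hinf v h.1]
    by_cases hw : (G.neighborSet w).Infinite
    · rw [hinf w hw]
      exact hcP v w h
    · have := hχM w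
      simp only [M, if_neg hw, Finset.mem_filter] at this
      exact this.2 v h
  refine ⟨χ, fun v => ?_, fun v => ?_⟩
  · by_cases hv : (G.neighborSet v).Infinite
    · exact hinf v hv ▸ hcL v
    · have := hχM v
      simp only [M, if_neg hv, Finset.mem_filter] at this
      exact this.1
  · by_cases hv : (G.neighborSet v).Infinite
    · have hdiff : {u | G.Adj v u ∧ χ u ≠ χ v}.Infinite := by
        have hinj : Function.Injective fun n : ℕ => f (⟨v, hv⟩, n) := fun a b h => by
          simpa using hf h
        refine (Set.infinite_range_of_injective hinj).mono ?_
        rintro _ ⟨n, rfl⟩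
        exact ⟨(hfA (⟨v, hv⟩, n)).1, hpar v _ ⟨hv, n, rfl⟩⟩
      exact (Cardinal.mk_le_aleph0).trans (Cardinal.infinite_iff.1 hdiff.to_subtype)
    · have hfin : (G.neighborSet v).Finite := not_not.1 hv
      rw [← Set.cast_ncard (hfin.subset fun u hu => hu.1),
        ← Set.cast_ncard (hfin.subset fun u hu => hu.1)]
      exact_mod_cast hχ v hfin
end

section
/- Every finite simple graph is majority $2$-choosable: for every assignment to each vertex $v$ of a list $L(v)$ of $2$ colours, there exists a colouring $\chi$ with $\chi(v) \in L(v)$ for every vertex $v$ such that for every vertex $v$, the number of neighbours $u$ of $v$ with $\chi(u) = \chi(v)$ is at most half the degree of $v$. -/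
/-!
Among all colourings from the lists, take one minimising the number of (ordered) monochromatic
adjacent pairs. Recolouring a single vertex `v` from `c` to `d` changes this number by twice the
difference between the numbers of neighbours of `v` coloured `d` and `c`
(`monoPairs_eq_of_vertex`). So, by minimality, at most as many neighbours of `v` have the colour
of `v` as have the other colour in `L v`. These two sets of neighbours are disjoint, so the first
contains at most half of the neighbours.
-/

/-- The number of ordered pairs of adjacent vertices having the same colour, i.e. twice the number
of monochromatic edges. -/
def monoPairs {V C : Type*} [Fintype V] (G : SimpleGraph V) [DecidableRel G.Adj] [DecidableEq C]
    (χ : V → C) : ℕ :=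
  ∑ u, ∑ w, if G.Adj u w ∧ χ u = χ w then 1 else 0

/-- Splitting the monochromatic pairs into those avoiding `v` and those containing `v`. The first
summand does not depend on the colour of `v`. -/
theorem monoPairs_eq_of_vertex {V C : Type*} [Fintype V] [DecidableEq V] (G : SimpleGraph V)
    [DecidableRel G.Adj] [DecidableEq C] (χ : V → C) (v : V) :
    monoPairs G χ =
      (∑ u ∈ Finset.univ.erase v, ∑ w ∈ Finset.univ.erase v,
        if G.Adj u w ∧ χ u = χ w then 1 else 0) +
      2 * ((G.neighborFinset v).filter (fun u => χ u = χ v)).card := by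
  have hcard : ((G.neighborFinset v).filter (fun u => χ u = χ v)).card =
      ∑ w ∈ Finset.univ.erase v, if G.Adj v w ∧ χ v = χ w then 1 else 0 := by
    rw [← Finset.card_filter]
    congr 1
    ext w
    simp only [Finset.mem_filter, SimpleGraph.mem_neighborFinset, Finset.mem_erase,
      Finset.mem_univ, and_true]
    exact ⟨fun h => ⟨h.1.ne', h.1, h.2.symm⟩, fun h => ⟨h.2.1, h.2.2.symm⟩⟩
  have hsymm : ∀ u w, (if G.Adj u w ∧ χ u = χ w then 1 else 0) =
      if G.Adj w u ∧ χ w = χ u then 1 else 0 := fun u w => by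
    simp only [G.adj_comm u w, eq_comm (a := χ u)]
  rw [hcard, monoPairs, ← Finset.sum_erase_add _ _ (Finset.mem_univ v)]
  simp only [← Finset.sum_erase_add _ _ (Finset.mem_univ v), Finset.sum_add_distrib]
  rw [Finset.sum_congr rfl (fun u _ => hsymm u v)]
  simp only [SimpleGraph.irrefl, false_and, if_false]
  ring

/-- Every finite simple graph is majority 2-choosable. -/
theorem finite_majority_two_choosable {V C : Type*} [Fintype V] (G : SimpleGraph V)
    [DecidableRel G.Adj] [DecidableEq C]
    (L : V → Finset C) (hL : ∀ v, (L v).card = 2) :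
    ∃ χ : V → C, (∀ v, χ v ∈ L v) ∧
      ∀ v, 2 * ((G.neighborFinset v).filter (fun u => χ u = χ v)).card ≤ G.degree v := by
  classical
  have hne : ∀ v, Nonempty (L v) := fun v =>
    (Finset.card_pos.mp (by rw [hL v]; norm_num)).to_subtype
  obtain ⟨ψ, hψ⟩ := Finite.exists_min
    (fun ψ : (∀ v, L v) => monoPairs G (fun v => (ψ v : C)))
  set χ : V → C := fun v => ψ v with hχ
  refine ⟨χ, fun v => (ψ v).2, fun v => ?_⟩
  obtain ⟨d, hd, hdv⟩ := Finset.exists_mem_ne (by rw [hL v]; norm_num : 1 < (L v).card) (χ v)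
  have hmin : monoPairs G χ ≤ monoPairs G (Function.update χ v d) := by
    have hupd : Function.update χ v d =
        fun u => (Function.update ψ v ⟨d, hd⟩ u : C) := by
      funext u
      by_cases h : u = v
      · subst h; simp
      · simp [h, hχ]
    rw [hupd]
    exact hψ (Function.update ψ v ⟨d, hd⟩)
  rw [monoPairs_eq_of_vertex G χ v, monoPairs_eq_of_vertex G (Function.update χ v d) v] at hmin
  have hrest : (∑ u ∈ Finset.univ.erase v, ∑ w ∈ Finset.univ.erase v,
        if G.Adj u w ∧ Function.update χ v d u = Function.update χ v d w then 1 else 0) =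
      ∑ u ∈ Finset.univ.erase v, ∑ w ∈ Finset.univ.erase v,
        if G.Adj u w ∧ χ u = χ w then 1 else 0 := by
    refine Finset.sum_congr rfl fun u hu => Finset.sum_congr rfl fun w hw => ?_
    rw [Function.update_of_ne (Finset.ne_of_mem_erase hu),
      Function.update_of_ne (Finset.ne_of_mem_erase hw)]
  have hnbr : (G.neighborFinset v).filter
        (fun u => Function.update χ v d u = Function.update χ v d v) =
      (G.neighborFinset v).filter (fun u => χ u = d) := by
    refine Finset.filter_congr fun u hu => ?_
    rw [Function.update_self, Function.update_of_ne ((G.mem_neighborFinset v u).mp hu).ne']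
  rw [hrest, hnbr] at hmin
  have hdisj : Disjoint ((G.neighborFinset v).filter (fun u => χ u = χ v))
      ((G.neighborFinset v).filter (fun u => χ u = d)) :=
    Finset.disjoint_filter.mpr fun u _ h₁ h₂ => hdv (h₂.symm.trans h₁)
  have hle := Finset.card_le_card (Finset.union_subset
    (Finset.filter_subset (fun u => χ u = χ v) (G.neighborFinset v))
    (Finset.filter_subset (fun u => χ u = d) (G.neighborFinset v)))
  rw [Finset.card_union_of_disjoint hdisj, G.card_neighborFinset_eq_degree] at hle
  omega
end

section
/- Every finite acyclic digraph is majority $2$-choosable: for every assignment to each vertex $v$ of a list $L(v)$ of $2$ colours, there exists a colouring $\chi$ with $\chi(v) \in L(v)$ for every vertex $v$ such that for every vertex $v$, the number of out-neighbours $u$ of $v$ with $\chi(u) = \chi(v)$ is at most half the out-degree of $v$. -/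
/-!
An acyclic finite digraph can be coloured greedily, sinks first: when `v` is reached, all its
out-neighbours are already coloured, and the two colour classes of `L v` among them are disjoint,
so one of the two colours occurs on at most half of the out-neighbours (`exists_minority_colour`).
Later choices do not change the colours of the out-neighbours of `v`, so the bound persists.
-/

/-- For any colouring `f` of a finite set `S`, one of two distinct colours is used on at most
half of `S`. -/
theorem exists_minority_colour {V C : Type*} [DecidableEq C] (S : Finset V) (f : V → C)
    (l : Finset C) (hl : l.card = 2) :
    ∃ c ∈ l, 2 * (S.filter (fun u => f u = c)).card ≤ S.card := by
  obtain ⟨a, b, hab, rfl⟩ := Finset.card_eq_two.mp hl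
  have hsum : (S.filter (fun u => f u = a)).card + (S.filter (fun u => f u = b)).card
      ≤ S.card := by
    classical
    rw [← Finset.card_union_of_disjoint
      (Finset.disjoint_filter.mpr fun u _ ha hb => hab (ha.symm.trans hb))]
    exact Finset.card_le_card
      (Finset.union_subset (Finset.filter_subset _ _) (Finset.filter_subset _ _))
  by_cases h : 2 * (S.filter (fun u => f u = a)).card ≤ S.card
  · exact ⟨a, by simp, h⟩
  · exact ⟨b, by simp, by omega⟩

/-- Every finite acyclic digraph is majority 2-choosable. -/
theorem finite_acyclic_digraph_majority_two_choosable {V C : Type*} [Fintype V]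
    (r : V → V → Prop) [DecidableRel r]
    (hacyclic : Irreflexive (Relation.TransGen r))
    [DecidableEq C] (L : V → Finset C) (hL : ∀ v, (L v).card = 2) :
    ∃ χ : V → C, (∀ v, χ v ∈ L v) ∧
      ∀ v, 2 * ((Finset.univ.filter (fun u => r v u)).filter (fun u => χ u = χ v)).card ≤
        (Finset.univ.filter (fun u => r v u)).card := by
  have hwf : WellFounded (fun u v => r v u) := by
    haveI : IsTrans V (fun u v => Relation.TransGen r v u) := ⟨fun _ _ _ h₁ h₂ => h₂.trans h₁⟩
    haveI : Std.Irrefl (fun u v => Relation.TransGen r v u) := ⟨hacyclic⟩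
    exact Subrelation.wf (fun h => Relation.TransGen.single h)
      (Finite.wellFounded_of_trans_of_irrefl (fun u v => Relation.TransGen r v u))
  choose pick hpick_mem hpick using fun (v : V) (f : V → C) =>
    exists_minority_colour (Finset.univ.filter (fun u => r v u)) f (L v) (hL v)
  have hne : ∀ v, (L v).Nonempty := fun v => Finset.card_pos.mp (by rw [hL v]; norm_num)
  choose d _ using hne
  -- `d` only extends the colouring of the out-neighbours of `v` to a total function.
  let F : ∀ v, (∀ u, r v u → C) → C :=
    fun v ih => pick v (fun u => if h : r v u then ih u h else d u)
  let χ : V → C := hwf.fix F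
  have hχ : ∀ v, χ v = pick v (fun u => if r v u then χ u else d u) := fun v => by
    have h := hwf.fix_eq F v
    simpa only [F, dite_eq_ite] using h
  refine ⟨χ, fun v => by rw [hχ v]; exact hpick_mem _ _, fun v => ?_⟩
  have hv := hpick v (fun u => if r v u then χ u else d u)
  rw [← hχ v] at hv
  convert hv using 3
  refine Finset.filter_congr fun u hu => ?_
  rw [if_pos (Finset.mem_filter.mp hu).2]
end

section
/- Every countable acyclic digraph is majority $3$-choosable: for every assignment to each vertex $v$ of a list $L(v)$ of $3$ colours, there exists a colouring $\chi$ with $\chi(v) \in L(v)$ for every vertex $v$ that is a majority colouring. -/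
/-!
Every vertex needs only two of its three colours for the finite part of the problem; the third
one is spent on making the vertices of infinite out-degree happy.

Fix an injection `f : V → ℕ`. A greedy choice along `ℕ` gives every vertex `v` of infinite
out-degree an infinite set of *children* among its out-neighbours, all of larger index than `v`,
such that no vertex has two parents (`exists_children`). Since parents have smaller index, one can
recursively pick `c u ∈ L u` with `c u ≠ c v` whenever `v` is the parent of `u`
(`exists_avoiding`). Vertices `v` of infinite out-degree are coloured by `c`. A vertex `u` of finite
out-degree only loses the colour `c v` of its parent, if any, so it keeps at least two colours.
Whatever happens next, a vertex of infinite out-degree sees infinitely many out-neighbours (its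
children) in a different colour, which in a countable vertex set is all that is required.

For a finite set `T` of vertices with at least two available colours each, acyclicity yields a
colouring satisfying the majority condition on `T`: treat last a vertex without in-neighbours in
`T`, giving it the less used of two of its colours (`exists_majority_on_finset`). Rado's selection
principle glues these finite solutions into a colouring satisfying the condition at every vertex of
finite out-degree, because there the condition only involves finitely many vertices.
-/

/-- The majority condition for the colouring `χ` at the vertex `v`. -/
def MajorityAt {V C : Type*} (r : V → V → Prop) (χ : V → C) (v : V) : Prop :=
  Cardinal.mk {u | r v u ∧ χ u = χ v} ≤ Cardinal.mk {u | r v u ∧ χ u ≠ χ v}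

lemma MajorityAt.congr {V C : Type*} {r : V → V → Prop} {χ ψ : V → C} {v : V}
    (h : MajorityAt r χ v) (hv : ψ v = χ v) (hu : ∀ u, r v u → ψ u = χ u) :
    MajorityAt r ψ v := by
  have h1 : {u | r v u ∧ ψ u = ψ v} = {u | r v u ∧ χ u = χ v} := by
    ext u
    simp only [Set.mem_ofPred_eq]
    refine and_congr_right fun h => ?_
    rw [hv, hu u h]
  have h2 : {u | r v u ∧ ψ u ≠ ψ v} = {u | r v u ∧ χ u ≠ χ v} := by
    ext u
    simp only [Set.mem_ofPred_eq]
    refine and_congr_right fun h => ?_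
    rw [hv, hu u h]
  unfold MajorityAt at *
  rwa [h1, h2]

/-- A vertex that is not its own out-neighbour can be recoloured, with one of any two prescribed
colours, so as to satisfy the majority condition. -/
lemma exists_recolour {V C : Type*} [DecidableEq V] {r : V → V → Prop} (χ : V → C) {v : V}
    (hv : ¬ r v v) {a b : C} (hab : a ≠ b) :
    ∃ x, (x = a ∨ x = b) ∧ MajorityAt r (Function.update χ v x) v := by
  have key : ∀ x y : C, x ≠ y →
      Cardinal.mk {u | r v u ∧ χ u = x} ≤ Cardinal.mk {u | r v u ∧ χ u = y} →
      MajorityAt r (Function.update χ v x) v := by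
    intro x y hxy h
    have hne : ∀ u, r v u → u ≠ v := fun u hu e => hv (e ▸ hu)
    unfold MajorityAt
    refine le_trans (Cardinal.mk_le_mk_of_subset ?_) (h.trans (Cardinal.mk_le_mk_of_subset ?_))
    · rintro u ⟨hu, he⟩
      rw [Function.update_self, Function.update_of_ne (hne u hu)] at he
      exact ⟨hu, he⟩
    · rintro u ⟨hu, he⟩
      refine ⟨hu, ?_⟩
      rw [Function.update_self, Function.update_of_ne (hne u hu), he]
      exact hxy.symm
  rcases le_total (Cardinal.mk {u | r v u ∧ χ u = a}) (Cardinal.mk {u | r v u ∧ χ u = b}) with h | h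
  · exact ⟨a, Or.inl rfl, key a b hab h⟩
  · exact ⟨b, Or.inr rfl, key b a hab.symm h⟩

lemma exists_source {V : Type*} {r : V → V → Prop}
    (hr : ∀ v, ¬ Relation.TransGen r v v) {T : Finset V} (hT : T.Nonempty) :
    ∃ v ∈ T, ∀ u ∈ T, ¬ r u v := by
  classical
  let _ : IsStrictOrder V (Relation.TransGen r) :=
    { irrefl := hr, trans := fun _ _ _ h h' => h.trans h' }
  obtain ⟨⟨v, hv⟩, -, h⟩ := (Finite.wellFounded_of_trans_of_irrefl
    (fun x y : T => Relation.TransGen r x y)).has_min Set.univ ⟨⟨_, hT.choose_spec⟩, trivial⟩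
  exact ⟨v, hv, fun u hu huv => h ⟨u, hu⟩ trivial (Relation.TransGen.single huv)⟩

lemma exists_majority_on_finset {V C : Type*} {r : V → V → Prop}
    (hr : ∀ v, ¬ Relation.TransGen r v v) (M : V → Finset C) (hM : ∀ v, (M v).Nonempty)
    (T : Finset V) (hT : ∀ v ∈ T, 1 < (M v).card) :
    ∃ χ : V → C, (∀ v, χ v ∈ M v) ∧ ∀ v ∈ T, MajorityAt r χ v := by
  classical
  induction T using Finset.strongInduction with
  | H T ih =>
    rcases T.eq_empty_or_nonempty with rfl | hne
    · exact ⟨fun v => (hM v).choose, fun v => (hM v).choose_spec, by simp⟩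
    obtain ⟨v, hv, hsrc⟩ := exists_source hr hne
    obtain ⟨χ, hχ, hmaj⟩ := ih (T.erase v) (Finset.erase_ssubset hv)
      fun u hu => hT u (Finset.mem_of_mem_erase hu)
    obtain ⟨a, ha, b, hb, hab⟩ := Finset.one_lt_card.1 (hT v hv)
    obtain ⟨x, hx, hxv⟩ := exists_recolour χ (hsrc v hv) hab
    refine ⟨Function.update χ v x, fun u => ?_, fun u hu => ?_⟩
    · rcases eq_or_ne u v with rfl | huv
      · rw [Function.update_self]
        rcases hx with rfl | rfl <;> assumption
      · rw [Function.update_of_ne huv]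
        exact hχ u
    · rcases eq_or_ne u v with rfl | huv
      · exact hxv
      -- Recolouring `v` is invisible from `u`, since `v` has no in-neighbours in `T`.
      · refine (hmaj u (Finset.mem_erase.2 ⟨huv, hu⟩)).congr (Function.update_of_ne huv _ _) ?_
        intro w hw
        exact Function.update_of_ne (by rintro rfl; exact hsrc u hu hw) _ _

/-- The relation `P v u` reads "`v` is the parent of `u`". -/
lemma exists_children {V : Type*} (r : V → V → Prop) {f : V → ℕ} (hf : f.Injective) :
    ∃ P : V → V → Prop, (∀ v u, P v u → r v u ∧ f v < f u ∧ {w | r v w}.Infinite) ∧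
      (∀ v v' u, P v u → P v' u → v = v') ∧
      ∀ v, {w | r v w}.Infinite → {u | P v u}.Infinite := by
  classical
  by_cases hI : ∃ v, {w | r v w}.Infinite
  swap
  · exact ⟨fun _ _ => False, by simp, by simp, fun v hv => (hI ⟨v, hv⟩).elim⟩
  have : Countable V := hf.countable
  have : Nonempty {v // {w | r v w}.Infinite} := let ⟨v, hv⟩ := hI; ⟨⟨v, hv⟩⟩
  obtain ⟨g, hg⟩ := exists_surjective_nat {v // {w | r v w}.Infinite}
  -- The sequence `e` visits every vertex of infinite out-degree infinitely often.
  let e : ℕ → V := fun k => (g k.unpair.1).1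
  have he : ∀ k, {w | r (e k) w}.Infinite := fun k => (g k.unpair.1).2
  have hex : ∀ k m, ∃ u, r (e k) u ∧ m < f u := by
    intro k m
    obtain ⟨_, ⟨u, hu, rfl⟩, hlt⟩ := ((he k).image hf.injOn).exists_gt m
    exact ⟨u, hu, hlt⟩
  choose nxt hnr hnf using hex
  let w : ℕ → V := fun k => Nat.rec (nxt 0 (f (e 0)))
    (fun k x => nxt (k + 1) (max (f x) (f (e (k + 1))))) k
  have hw : ∀ k, w (k + 1) = nxt (k + 1) (max (f (w k)) (f (e (k + 1)))) := fun _ => rfl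
  have hwr : ∀ k, r (e k) (w k) := by
    rintro (_ | k)
    · exact hnr _ _
    · rw [hw]; exact hnr _ _
  have hwf : ∀ k, f (e k) < f (w k) := by
    rintro (_ | k)
    · exact hnf _ _
    · rw [hw]; exact (le_max_right _ _).trans_lt (hnf _ _)
  have hmono : StrictMono (f ∘ w) := strictMono_nat_of_lt_succ fun k => by
    simp only [Function.comp, hw k]
    exact (le_max_left _ _).trans_lt (hnf _ _)
  have hinj : w.Injective := hmono.injective.of_comp
  refine ⟨fun v u => ∃ k, e k = v ∧ w k = u, ?_, ?_, ?_⟩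
  · rintro _ _ ⟨k, rfl, rfl⟩
    exact ⟨hwr k, hwf k, he k⟩
  · rintro _ _ _ ⟨k, rfl, rfl⟩ ⟨l, rfl, h⟩
    rw [hinj h]
  · intro v hv
    obtain ⟨n, hn⟩ := hg ⟨v, hv⟩
    refine Set.infinite_of_injective_forall_mem (f := fun m : ℕ => w (Nat.pair n m)) ?_ ?_
    · intro m m' h
      exact (Nat.pair_eq_pair.1 (hinj h)).2
    · intro m
      exact ⟨Nat.pair n m, by simp [e, hn], rfl⟩

lemma exists_avoiding {V C : Type*} {P : V → V → Prop} (hwf : WellFounded P)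
    (huniq : ∀ v v' u, P v u → P v' u → v = v') (L : V → Finset C)
    (hL : ∀ v, 1 < (L v).card) :
    ∃ c : V → C, (∀ v, c v ∈ L v) ∧ ∀ v u, P v u → c u ≠ c v := by
  classical
  have hpick : ∀ u a, ∃ b ∈ L u, b ≠ a := fun u a => Finset.exists_mem_ne (hL u) a
  choose pick hmem hne using hpick
  have hLne : ∀ u, ∃ b, b ∈ L u := fun u => Finset.card_pos.1 (zero_lt_one.trans (hL u))
  choose d hd using hLne
  let F : ∀ u, (∀ v, P v u → C) → C := fun u ih =>
    if h : ∃ v, P v u then pick u (ih h.choose h.choose_spec) else d u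
  refine ⟨hwf.fix F, fun u => ?_, fun v u hvu => ?_⟩
  · rw [hwf.fix_eq]
    by_cases h : ∃ v, P v u
    · simp only [F, dif_pos h]
      exact hmem _ _
    · simp only [F, dif_neg h]
      exact hd _
  · have h : ∃ v, P v u := ⟨v, hvu⟩
    have hc : hwf.fix F u = pick u (hwf.fix F h.choose) := by
      rw [hwf.fix_eq]
      simp only [F, dif_pos h]
    rw [hc, huniq v _ u hvu h.choose_spec]
    exact hne _ _

/-- Theorem 2.3: every countable acyclic digraph is majority 3-choosable. -/
theorem countable_acyclic_digraph_majority_three_choosable {V C : Type*} [Countable V]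
    (r : V → V → Prop) (hacyclic : Irreflexive (Relation.TransGen r))
    (L : V → Finset C) (hL : ∀ v, (L v).card = 3) :
    ∃ χ : V → C, (∀ v, χ v ∈ L v) ∧
      ∀ v, Cardinal.mk {u | r v u ∧ χ u = χ v} ≤ Cardinal.mk {u | r v u ∧ χ u ≠ χ v} := by
  classical
  obtain ⟨f, hf⟩ := exists_injective_nat V
  obtain ⟨P, hP, huniq, hinf⟩ := exists_children r hf
  have hwf : WellFounded P :=
    Subrelation.wf (fun {v u} h => (hP v u h).2.1) (measure f).wf
  obtain ⟨c, hcL, hc⟩ := exists_avoiding hwf huniq L fun v => by rw [hL v]; norm_num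
  -- The colours left: only `c v` at infinite out-degree, all but the parent's at finite out-degree.
  let M : V → Finset C := fun u =>
    if {w | r u w}.Infinite then {c u} else (L u).filter fun a => ∀ v, P v u → a ≠ c v
  have hcM : ∀ u, c u ∈ M u := by
    intro u
    by_cases hu : {w | r u w}.Infinite
    · simp [M, hu]
    · simp only [M, if_neg hu, Finset.mem_filter]
      exact ⟨hcL u, fun v hv => hc v u hv⟩
  have hML : ∀ u, M u ⊆ L u := by
    intro u
    by_cases hu : {w | r u w}.Infinite
    · simp only [M, if_pos hu, Finset.singleton_subset_iff]
      exact hcL u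
    · simp only [M, if_neg hu]
      exact Finset.filter_subset _ _
  have hMP : ∀ v u, P v u → ∀ a ∈ M u, a ≠ c v := by
    intro v u hvu a ha
    by_cases hu : {w | r u w}.Infinite
    · simp only [M, if_pos hu, Finset.mem_singleton] at ha
      exact ha ▸ hc v u hvu
    · simp only [M, if_neg hu, Finset.mem_filter] at ha
      exact ha.2 v hvu
  have hMcard : ∀ u, {w | r u w}.Finite → 1 < (M u).card := by
    intro u hu
    have hu' : ¬ {w | r u w}.Infinite := Set.not_infinite.2 hu
    by_cases h : ∃ v, P v u
    · obtain ⟨v, hv⟩ := h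
      have hsub : (L u).erase (c v) ⊆ M u := by
        intro a ha
        simp only [M, if_neg hu', Finset.mem_filter]
        rw [Finset.mem_erase] at ha
        exact ⟨ha.2, fun v' hv' => huniq v v' u hv hv' ▸ ha.1⟩
      have h1 := Finset.card_le_card hsub
      have h2 := Finset.pred_card_le_card_erase (s := L u) (a := c v)
      have h3 := hL u
      omega
    · have : M u = L u := by
        simp only [M, if_neg hu']
        exact Finset.filter_true_of_mem fun a _ v hv => (h ⟨v, hv⟩).elim
      rw [this, hL u]
      norm_num
  have hfin : ∀ T : Finset V, ∃ χ : V → C, (∀ v, χ v ∈ M v) ∧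
      ∀ v ∈ T, {w | r v w}.Finite → MajorityAt r χ v := by
    intro T
    obtain ⟨χ, h1, h2⟩ := exists_majority_on_finset hacyclic M (fun v => ⟨_, hcM v⟩)
      (T.filter fun v => {w | r v w}.Finite) fun v hv => hMcard v (Finset.mem_filter.1 hv).2
    exact ⟨χ, h1, fun v hv hv' => h2 v (Finset.mem_filter.2 ⟨hv, hv'⟩)⟩
  choose g hgM hg using hfin
  -- Through the subtypes of available colours, Rado's principle applies to colourings from `M`.
  obtain ⟨χ, hχ⟩ := Finset.rado_selection (β := fun v => {a // a ∈ M v})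
    (fun T v => ⟨g T v, hgM T v⟩)
  refine ⟨fun v => (χ v).1, fun v => hML v (χ v).2, fun v => ?_⟩
  by_cases hv : {w | r v w}.Infinite
  · have hvc : (χ v).1 = c v := by
      have h := (χ v).2
      simpa only [M, if_pos hv, Finset.mem_singleton] using h
    have hsub : {u | P v u} ⊆ {u | r v u ∧ (χ u).1 ≠ (χ v).1} := by
      intro u hu
      refine ⟨(hP v u hu).1, ?_⟩
      rw [hvc]
      exact hMP v u hu _ (χ u).2
    have hi : {u | r v u ∧ (χ u).1 ≠ (χ v).1}.Infinite := (hinf v hv).mono hsub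
    have := hi.to_subtype
    exact Cardinal.mk_le_aleph0.trans (Cardinal.aleph0_le_mk _)
  · have hv' : {w | r v w}.Finite := Set.not_infinite.1 hv
    obtain ⟨T, hT, hagree⟩ := hχ (insert v hv'.toFinset)
    refine MajorityAt.congr (hg T v (hT (Finset.mem_insert_self _ _)) hv') ?_ fun u hu => ?_
    · exact congrArg Subtype.val (hagree v (Finset.mem_insert_self _ _))
    · exact congrArg Subtype.val
        (hagree u (Finset.mem_insert_of_mem (hv'.mem_toFinset.2 hu)))
end

section
/- For each natural number $k \geq 2$, every countable simple graph is $(1/k)$-majority $(k+1)$-choosable: for every assignment to each vertex $v$ of a list $L(v)$ of $k+1$ colours, there exists a colouring $\chi$ with $\chi(v) \in L(v)$ for every vertex $v$ that is a $(1/k)$-majority colouring. -/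
/-!
Every vertex of infinite degree claims infinitely many of its neighbours as *children*, in such a way
that each vertex is claimed by at most one parent and that a parent precedes its children in a fixed
enumeration of the vertices (`exists_injective_transversal`). A child is meant to avoid the
colour of its parent; going through the enumeration, this can be arranged for all vertices at once
with a provisional colouring `c`, since only one colour is ever forbidden. The infinite-degree
vertices keep their provisional colours.

A vertex of finite degree still has at least `k` admissible colours after the colour of its parent
is removed. With the infinite-degree vertices frozen, it remains to recolour the finite-degree ones
from lists of size at least `k`. For finitely many of them, minimise the number of monochromatic
edges meeting them: at a minimum no colour in the list of `v` occurs on fewer neighbours of `v` than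
its own, so averaging over the list gives the bound `deg v / k` (`exists_good_on_finset`). Rado's
selection principle passes from finite sets to all vertices (`exists_good`).
-/

/-- Well-founded recursion along `g : ι → ℕ` where each step only asserts that a suitable value
exists, depending on the values chosen earlier. -/
theorem exists_of_measure_step {ι α : Type*} (g : ι → ℕ)
    (Q : (i : ι) → ({j // g j < g i} → α) → α → Prop) (h : ∀ i p, ∃ a, Q i p a) :
    ∃ f : ι → α, ∀ i, Q i (fun j => f j) (f i) := by
  choose F hF using h
  let f : ι → α := (measure g).wf.fix (fun i ih => F i (fun j => ih j.1 j.2))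
  refine ⟨f, fun i => ?_⟩
  have : f i = F i (fun j => f j) := WellFounded.fix_eq _ _ _
  rw [this]
  exact hF _ _

/-- A countable family of infinite sets has an injective system of representatives. -/
theorem exists_injective_transversal {ι α : Type*} [Countable ι] (A : ι → Set α)
    (hA : ∀ i, (A i).Infinite) : ∃ f : ι → α, Function.Injective f ∧ ∀ i, f i ∈ A i := by
  obtain ⟨g, hg⟩ := exists_injective_nat ι
  obtain ⟨f, hf⟩ := exists_of_measure_step g
    (fun i (p : {j // g j < g i} → α) a => a ∈ A i ∧ a ∉ Set.range p) (fun i p => by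
      have : Finite {j // g j < g i} :=
        ((Set.finite_Iio (g i)).preimage (f := g) hg.injOn).to_subtype
      exact ((hA i).sdiff (Set.finite_range p)).nonempty)
  refine ⟨f, fun i j hij => ?_, fun i => (hf i).1⟩
  by_contra hne
  rcases lt_or_gt_of_ne (fun h => hne (hg h)) with h | h
  · exact (hf j).2 ⟨⟨i, h⟩, hij⟩
  · exact (hf i).2 ⟨⟨j, h⟩, hij.symm⟩

/-- The monochromatic edges of `G` under `χ` that meet `W`. -/
def monoEdges {V C : Type*} (G : SimpleGraph V) (W : Finset V) (χ : V → C) : Set (Sym2 V) :=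
  {ed | ed ∈ G.edgeSet ∧ (∃ w ∈ W, w ∈ ed) ∧ ∃ c, ∀ x ∈ ed, χ x = c}

theorem monoEdges_finite {V C : Type*} (G : SimpleGraph V) (W : Finset V)
    (hW : ∀ v ∈ W, (G.neighborSet v).Finite) (χ : V → C) : (monoEdges G W χ).Finite := by
  refine (W.finite_toSet.biUnion (t := fun w => (fun u => s(w, u)) '' G.neighborSet w)
    (fun w hw => (hW w hw).image _)).subset ?_
  rintro ed ⟨hed, ⟨w, hw, hwe⟩, -⟩
  obtain ⟨u, rfl⟩ := hwe
  exact Set.mem_biUnion hw ⟨u, hed, rfl⟩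

/-- The number of monochromatic edges meeting `W` is the number of neighbours of `v` that share
its colour, plus the number of those edges avoiding `v`. -/
theorem ncard_monoEdges {V C : Type*} (G : SimpleGraph V) (W : Finset V)
    (hW : ∀ v ∈ W, (G.neighborSet v).Finite) (χ : V → C) (v : V) (hv : v ∈ W) :
    (monoEdges G W χ).ncard =
      {u | G.Adj v u ∧ χ u = χ v}.ncard + (monoEdges G W χ \ {ed | v ∈ ed}).ncard := by
  rw [← Set.ncard_inter_add_ncard_sdiff_eq_ncard (monoEdges G W χ) {ed | v ∈ ed}
    (monoEdges_finite G W hW χ)]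
  congr 1
  have hinj : Function.Injective (fun u => s(v, u)) := fun a b h => Sym2.congr_right.1 h
  rw [← Set.ncard_image_of_injective _ hinj]
  congr 1
  ext ed
  constructor
  · rintro ⟨⟨hed, -, c, hc⟩, u, rfl⟩
    refine ⟨u, ⟨hed, ?_⟩, rfl⟩
    rw [hc u (by simp), hc v (by simp)]
  · rintro ⟨u, ⟨ha, hu⟩, rfl⟩
    refine ⟨⟨ha, ⟨v, hv, by simp⟩, χ v, ?_⟩, by simp⟩
    intro x hx
    rcases Sym2.mem_iff.1 hx with rfl | rfl
    · rfl
    · exact hu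

open Classical in
theorem monoEdges_update_diff {V C : Type*} (G : SimpleGraph V) (W : Finset V) (χ : V → C) (v : V)
    (c : C) :
    monoEdges G W (Function.update χ v c) \ {ed | v ∈ ed} = monoEdges G W χ \ {ed | v ∈ ed} := by
  ext ed
  simp only [monoEdges, Set.mem_sdiff, Set.mem_ofPred_eq]
  refine and_congr_left fun hv => and_congr_right fun _ => and_congr_right fun _ =>
    exists_congr fun d => forall₂_congr fun x hx => ?_
  have hxv : x ≠ v := by
    rintro rfl
    exact hv hx
  rw [Function.update_of_ne hxv]

open Classical in
/-- Averaging: if no colour of a list of size at least `k` occurs on fewer neighbours of `v` than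
`d`, then `k * d` is at most the degree of `v`. -/
theorem mul_le_ncard_neighborSet {V C : Type*} (G : SimpleGraph V) (χ : V → C) (v : V)
    (hv : (G.neighborSet v).Finite) (k d : ℕ) (M : Finset C) (hM : k ≤ M.card)
    (h : ∀ c ∈ M, d ≤ {u | G.Adj v u ∧ χ u = c}.ncard) :
    k * d ≤ (G.neighborSet v).ncard := by
  have key : ∀ c, {u | G.Adj v u ∧ χ u = c}.ncard
      = (hv.toFinset.filter (fun u => χ u = c)).card := fun c => by
    rw [← Set.ncard_coe_finset]
    congr 1
    ext u
    simp
  calc k * d ≤ M.card * d := Nat.mul_le_mul_right d hM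
    _ = ∑ _c ∈ M, d := by simp
    _ ≤ ∑ c ∈ M, (hv.toFinset.filter (fun u => χ u = c)).card :=
        Finset.sum_le_sum fun c hc => (h c hc).trans (key c).le
    _ = (M.biUnion fun c => hv.toFinset.filter (fun u => χ u = c)).card := by
        rw [Finset.card_biUnion]
        intro a _ b _ hab
        refine Finset.disjoint_left.2 fun x hx hx' => hab ?_
        rw [← (Finset.mem_filter.1 hx).2, (Finset.mem_filter.1 hx').2]
    _ ≤ hv.toFinset.card := Finset.card_le_card
        (Finset.biUnion_subset.2 fun c _ => Finset.filter_subset _ _)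
    _ = (G.neighborSet v).ncard := (Set.ncard_eq_toFinset_card _ hv).symm

open Classical in
/-- A colouring with the fewest monochromatic edges meeting the finite set `W` is good on `W`. -/
theorem exists_good_on_finset {V C : Type*} (G : SimpleGraph V) (k : ℕ) (M : V → Finset C)
    (hne : ∀ v, (M v).Nonempty) (W : Finset V)
    (hW : ∀ v ∈ W, (G.neighborSet v).Finite ∧ k ≤ (M v).card) :
    ∃ χ : V → C, (∀ v, χ v ∈ M v) ∧
      ∀ v ∈ W, k * {u | G.Adj v u ∧ χ u = χ v}.ncard ≤ (G.neighborSet v).ncard := by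
  have hfin := fun v hv => (hW v hv).1
  choose χ₀ hχ₀ using hne
  obtain ⟨χ, hχ, hmin⟩ := exists_minimalFor_of_wellFoundedLT
    (fun χ : V → C => ∀ v, χ v ∈ M v) (fun χ => (monoEdges G W χ).ncard) ⟨χ₀, hχ₀⟩
  refine ⟨χ, hχ, fun v hv => ?_⟩
  refine mul_le_ncard_neighborSet G χ v (hfin v hv) k _ (M v) (hW v hv).2 fun c hc => ?_
  have hle : (monoEdges G W χ).ncard ≤ (monoEdges G W (Function.update χ v c)).ncard := by
    have hmem : ∀ x, Function.update χ v c x ∈ M x := fun x => by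
      by_cases hx : x = v
      · subst hx; simpa using hc
      · simpa [hx] using hχ x
    rcases le_total (monoEdges G W χ).ncard
      (monoEdges G W (Function.update χ v c)).ncard with h | h
    · exact h
    · exact hmin hmem h
  rw [ncard_monoEdges G W hfin χ v hv, ncard_monoEdges G W hfin _ v hv,
    monoEdges_update_diff] at hle
  have heq : {u | G.Adj v u ∧ Function.update χ v c u = Function.update χ v c v}
      = {u | G.Adj v u ∧ χ u = c} := by
    ext u
    refine and_congr_right fun ha => ?_
    rw [Function.update_self, Function.update_of_ne ha.ne']
  rw [heq] at hle
  omega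

open Classical in
/-- Vertices of finite degree with lists of size at least `k` can be coloured well simultaneously,
whatever nonempty lists the other vertices have. -/
theorem exists_good {V C : Type*} (G : SimpleGraph V) (k : ℕ) (M : V → Finset C)
    (hne : ∀ v, (M v).Nonempty) (hM : ∀ v, (G.neighborSet v).Finite → k ≤ (M v).card) :
    ∃ χ : V → C, (∀ v, χ v ∈ M v) ∧ ∀ v, (G.neighborSet v).Finite →
      k * {u | G.Adj v u ∧ χ u = χ v}.ncard ≤ (G.neighborSet v).ncard := by
  have hloc : ∀ s : Finset V, ∃ χ : (v : V) → M v, ∀ v ∈ s, (G.neighborSet v).Finite →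
      k * {u | G.Adj v u ∧ (χ u : C) = χ v}.ncard ≤ (G.neighborSet v).ncard := fun s => by
    obtain ⟨χ, h1, h2⟩ := exists_good_on_finset G k M hne
      (s.filter fun v => (G.neighborSet v).Finite)
      (fun v hv => ⟨(Finset.mem_filter.1 hv).2, hM v (Finset.mem_filter.1 hv).2⟩)
    exact ⟨fun v => ⟨χ v, h1 v⟩, fun v hv hf => h2 v (Finset.mem_filter.2 ⟨hv, hf⟩)⟩
  choose g hg using hloc
  obtain ⟨χ, hχ⟩ := Finset.rado_selection g
  refine ⟨fun v => χ v, fun v => (χ v).2, fun v hv => ?_⟩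
  obtain ⟨t, hst, ht⟩ := hχ (insert v hv.toFinset)
  have hvt := ht v (by simp)
  have heq : {u | G.Adj v u ∧ (χ u : C) = χ v} = {u | G.Adj v u ∧ (g t u : C) = g t v} := by
    ext u
    refine and_congr_right fun ha => ?_
    rw [hvt, ht u (by simp [ha])]
  rw [heq]
  exact hg t v (hst (by simp)) hv

/-- Theorem 4.1 (graph case): for `k ≥ 2`, every countable graph is
`(1/k)`-majority `(k+1)`-choosable. -/
theorem countable_frac_majority_choosable {V C : Type*} [Countable V] (G : SimpleGraph V)
    (k : ℕ) (hk : 2 ≤ k) (L : V → Finset C) (hL : ∀ v, (L v).card = k + 1) :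
    ∃ χ : V → C, (∀ v, χ v ∈ L v) ∧
      (∀ v, (G.neighborSet v).Finite →
        k * {u | G.Adj v u ∧ χ u = χ v}.ncard ≤ (G.neighborSet v).ncard) ∧
      (∀ v, (G.neighborSet v).Infinite → {u | G.Adj v u ∧ χ u ≠ χ v}.Infinite) := by
  classical
  obtain ⟨e, he⟩ := exists_injective_nat V
  -- `f (v, n)` is the `n`-th child of the infinite-degree vertex `v`
  obtain ⟨f, hf, hfA⟩ := exists_injective_transversal
    (fun i : {v // (G.neighborSet v).Infinite} × ℕ => {u | G.Adj i.1 u ∧ e i.1 < e u})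
    (fun i => by
      refine (i.1.2.sdiff ((Set.finite_Iic (e i.1)).preimage (f := e) he.injOn)).mono ?_
      rintro u ⟨hu, hu'⟩
      exact ⟨hu, not_le.1 hu'⟩)
  let P : V → V → Prop := fun v u => ∃ (h : (G.neighborSet v).Infinite) (n : ℕ), f (⟨v, h⟩, n) = u
  have hPuniq : ∀ v w u, P v u → P w u → v = w := by
    rintro v w u ⟨h, n, hn⟩ ⟨h', m, hm⟩
    have := hf (hn.trans hm.symm)
    simp only [Prod.mk.injEq, Subtype.mk.injEq] at this
    exact this.1
  have hPlt : ∀ v u, P v u → e v < e u := by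
    rintro v u ⟨h, n, rfl⟩
    exact (hfA (⟨v, h⟩, n)).2
  obtain ⟨c, hc⟩ := exists_of_measure_step e
    (fun u (p : {v // e v < e u} → C) a => a ∈ L u ∧
      ∀ v : {v // e v < e u}, P v u → a ≠ p v) (fun u p => by
      have hcard : 1 < (L u).card := by rw [hL]; omega
      by_cases h : ∃ v : {v // e v < e u}, P v u
      · obtain ⟨v, hv⟩ := h
        obtain ⟨a, ha, hne⟩ := Finset.exists_mem_ne hcard (p v)
        refine ⟨a, ha, fun w hw => ?_⟩
        rwa [Subtype.ext (hPuniq _ _ _ hw hv)]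
      · obtain ⟨a, ha⟩ := Finset.card_pos.1 (by omega : 0 < (L u).card)
        exact ⟨a, ha, fun v hv => absurd ⟨v, hv⟩ h⟩)
  have hcP : ∀ v u, P v u → c u ≠ c v := fun v u h => (hc u).2 ⟨v, hPlt v u h⟩ h
  -- the lists left over once the colours of the parents are fixed
  let M : V → Finset C := fun u => if (G.neighborSet u).Finite then
    (L u).filter (fun a => ∀ v, P v u → a ≠ c v) else {c u}
  have hcM : ∀ u, c u ∈ M u := fun u => by
    by_cases hu : (G.neighborSet u).Finite
    · simp only [M, if_pos hu, Finset.mem_filter]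
      exact ⟨(hc u).1, fun v hv => hcP v u hv⟩
    · simp [M, if_neg hu]
  have hMcard : ∀ u, (G.neighborSet u).Finite → k ≤ (M u).card := fun u hu => by
    simp only [M, if_pos hu]
    by_cases h : ∃ v, P v u
    · obtain ⟨v, hv⟩ := h
      have hsub : (L u).erase (c v) ⊆ (L u).filter (fun a => ∀ v, P v u → a ≠ c v) := by
        intro a ha
        rw [Finset.mem_erase] at ha
        refine Finset.mem_filter.2 ⟨ha.2, fun w hw => ?_⟩
        rw [hPuniq w v u hw hv]
        exact ha.1
      have h1 := Finset.card_le_card hsub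
      have h2 := Finset.pred_card_le_card_erase (s := L u) (a := c v)
      have h3 := hL u
      omega
    · rw [Finset.filter_true_of_mem (fun a _ v hv => absurd ⟨v, hv⟩ h), hL]
      omega
  have hMsub : ∀ u, ∀ a ∈ M u, a ∈ L u ∧ ∀ v, P v u → a ≠ c v := fun u a ha => by
    by_cases hu : (G.neighborSet u).Finite
    · simpa only [M, if_pos hu, Finset.mem_filter] using ha
    · simp only [M, if_neg hu, Finset.mem_singleton] at ha
      subst ha
      exact ⟨(hc u).1, fun v hv => hcP v u hv⟩
  obtain ⟨χ, hχM, hχ⟩ := exists_good G k M (fun v => ⟨c v, hcM v⟩) hMcard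
  refine ⟨χ, fun v => (hMsub v _ (hχM v)).1, hχ, fun v hv => ?_⟩
  have hχv : χ v = c v := by
    have := hχM v
    rwa [show M v = {c v} from if_neg hv, Finset.mem_singleton] at this
  have hinj : Function.Injective (fun n : ℕ => f (⟨v, hv⟩, n)) := fun a b h =>
    (Prod.mk.inj (hf h)).2
  refine (Set.infinite_range_of_injective hinj).mono ?_
  rintro _ ⟨n, rfl⟩
  refine ⟨(hfA (⟨v, hv⟩, n)).1, ?_⟩
  rw [hχv]
  exact (hMsub _ _ (hχM _)).2 v ⟨hv, n, rfl⟩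
end

section
/- For each natural number $k \geq 2$, every finite acyclic digraph is $(1/k)$-majority $k$-choosable: for every assignment to each vertex $v$ of a list $L(v)$ of $k$ colours, there exists a colouring $\chi$ with $\chi(v) \in L(v)$ for every vertex $v$ such that every vertex $v$ has at most $d(v)/k$ out-neighbours $u$ with $\chi(u) = \chi(v)$, where $d(v)$ is the out-degree of $v$. -/
/-! Acyclicity and finiteness make the out-neighbour relation well-founded, so the vertices can be
coloured recursively, each one after all of its out-neighbours. When `v` is reached, the colours of
the list `L v` occur in total at most `d(v)` times on the out-neighbours of `v`, so one of these `k`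
colours occurs at most `d(v) / k` times (`exists_rare_color`); this colour is given to `v`. -/

/-- Some colour of a nonempty list is used on a finite set at most as often as the average over the
list. -/
lemma exists_rare_color {V C : Type*} [DecidableEq C] (N : Finset V) (g : V → C) (S : Finset C)
    (hS : S.Nonempty) : ∃ c ∈ S, S.card * (N.filter (fun u => g u = c)).card ≤ N.card := by
  by_contra! h
  have h1 : ∑ c ∈ S, (N.filter (fun u => g u = c)).card ≤ N.card := by
    rw [Finset.sum_card_fiberwise_eq_card_filter]
    exact Finset.card_filter_le _ _
  have h2 : ∑ _c ∈ S, N.card < ∑ c ∈ S, S.card * (N.filter (fun u => g u = c)).card :=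
    Finset.sum_lt_sum_of_nonempty hS h
  rw [← Finset.mul_sum, Finset.sum_const, smul_eq_mul] at h2
  exact absurd (Nat.lt_of_mul_lt_mul_left h2) (not_lt.mpr h1)

/-- For `k ≥ 2`, every finite acyclic digraph is `(1/k)`-majority `k`-choosable. -/
theorem finite_acyclic_digraph_frac_majority_choosable {V C : Type*} [Fintype V]
    (r : V → V → Prop) [DecidableRel r]
    (hacyclic : Irreflexive (Relation.TransGen r))
    [DecidableEq C] (k : ℕ) (hk : 2 ≤ k)
    (L : V → Finset C) (hL : ∀ v, (L v).card = k) :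
    ∃ χ : V → C, (∀ v, χ v ∈ L v) ∧
      ∀ v, k * ((Finset.univ.filter (fun u => r v u)).filter (fun u => χ u = χ v)).card ≤
        (Finset.univ.filter (fun u => r v u)).card := by
  have hne : ∀ v, (L v).Nonempty := fun v => Finset.card_pos.mp (by rw [hL]; omega)
  have wf : WellFounded (fun u v => r v u) := by
    haveI : IsTrans V (fun u v => Relation.TransGen r v u) := ⟨fun _ _ _ h1 h2 => h2.trans h1⟩
    haveI : Std.Irrefl (fun u v => Relation.TransGen r v u) := ⟨fun v h => hacyclic v h⟩
    exact Subrelation.wf (fun h => Relation.TransGen.single h)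
      (Finite.wellFounded_of_trans_of_irrefl (fun u v => Relation.TransGen r v u))
  choose pick hpick hrare using fun (v : V) (g : V → C) =>
    exists_rare_color (Finset.univ.filter (fun u => r v u)) g (L v) (hne v)
  let F : ∀ v, (∀ u, r v u → C) → C := fun v ih =>
    pick v (fun u => if h : r v u then ih u h else (hne v).choose)
  let χ : V → C := wf.fix F
  have hχ : ∀ v, χ v = pick v (fun u => if r v u then χ u else (hne v).choose) :=
    fun v => wf.fix_eq F v
  refine ⟨χ, fun v => by rw [hχ]; exact hpick _ _, fun v => ?_⟩
  have h := hrare v (fun u => if r v u then χ u else (hne v).choose)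
  rw [← hχ, hL] at h
  convert h using 3
  refine Finset.filter_congr fun u hu => ?_
  rw [if_pos (Finset.mem_filter.mp hu).2]
end

section
/- Let $V$ be a countable set and suppose that each $v \in V$ has a finite list $L(v)$ of colours with $|L(v)| = \ell + 1$. Let $\mathcal{X}$ be a countable (possibly finite) collection of sets, such that each $X \in \mathcal{X}$ consists of infinitely many pairs $(v, c)$ with $v \in V$ and $c \in L(v)$, all pairs in $X$ having distinct first coordinates. Then there is a choice of sublists $L'(v) \subseteq L(v)$ with $|L'(v)| = \ell$ for every $v \in V$, such that for every $X \in \mathcal{X}$ the set of pairs $(v, c) \in X$ with $c \notin L'(v)$ is infinite. -/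
/-!
It suffices to delete one colour `d v` from each list so that every `X ∈ 𝒳` contains infinitely
many pairs `(v, d v)`. Enumerate `𝒳` as a sequence in which every member occurs infinitely often
and pick greedily, from the `n`-th set, a pair whose first coordinate has not been used before
(`exists_transversal_fst_injective`); this is possible since each `X` has infinitely many first
coordinates. As no vertex is used twice, the chosen pairs determine `d` consistently, and each `X`
receives a new pair at each of its infinitely many occurrences.
-/

/-- Greedy choice: a sequence of sets with infinite projections has a system of representatives
with pairwise distinct first coordinates. -/
theorem exists_transversal_fst_injective {V C : Type*} (S : ℕ → Set (V × C))
    (hS : ∀ n, (Prod.fst '' S n).Infinite) :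
    ∃ p : ℕ → V × C, (∀ n, p n ∈ S n) ∧ Function.Injective fun n => (p n).1 := by
  classical
  have h : ∀ n (F : Finset V), ∃ p ∈ S n, p.1 ∉ F := by
    intro n F
    obtain ⟨_, ⟨p, hp, rfl⟩, hF⟩ := (hS n).exists_notMem_finset F
    exact ⟨p, hp, hF⟩
  choose f hfS hfF using h
  -- `G n` is the set of first coordinates used before stage `n`.
  let G : ℕ → Finset V := fun n => Nat.rec ∅ (fun n F => insert (f n F).1 F) n
  have hG : ∀ n, G (n + 1) = insert (f n (G n)).1 (G n) := fun _ => rfl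
  have hmono : Monotone G := monotone_nat_of_le_succ fun n => by
    rw [hG]
    exact Finset.subset_insert _ _
  refine ⟨fun n => f n (G n), fun n => hfS _ _, Function.Injective.of_lt_imp_ne fun m n hmn heq => ?_⟩
  refine hfF n (G n) (hmono (Nat.succ_le_of_lt hmn) ?_)
  rw [Nat.succ_eq_add_one, hG, ← heq]
  exact Finset.mem_insert_self _ _

/-- A choice of one colour per vertex that meets every member of `𝒳` infinitely often. -/
theorem exists_choice_infinite {V C : Type*} (L : V → Finset C) (hL : ∀ v, (L v).Nonempty)
    (𝒳 : Set (Set (V × C))) (h𝒳 : 𝒳.Countable)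
    (hmem : ∀ X ∈ 𝒳, ∀ p ∈ X, p.2 ∈ L p.1)
    (hinf : ∀ X ∈ 𝒳, X.Infinite)
    (hinj : ∀ X ∈ 𝒳, Set.InjOn Prod.fst X) :
    ∃ d : V → C, (∀ v, d v ∈ L v) ∧ ∀ X ∈ 𝒳, {p ∈ X | p.2 = d p.1}.Infinite := by
  classical
  choose d₀ hd₀ using hL
  rcases 𝒳.eq_empty_or_nonempty with rfl | hne
  · exact ⟨d₀, hd₀, by simp⟩
  obtain ⟨e, rfl⟩ := h𝒳.exists_eq_range hne
  have he : ∀ n, e n ∈ Set.range e := Set.mem_range_self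
  -- Reading off the first component of `Nat.unpair` repeats each `e i` infinitely often.
  obtain ⟨p, hpS, hpinj⟩ := exists_transversal_fst_injective (fun n => e n.unpair.1)
    fun n => (hinf _ (he _)).image (hinj _ (he _))
  let d : V → C := fun v => if h : ∃ n, (p n).1 = v then (p h.choose).2 else d₀ v
  have hd : ∀ n, d (p n).1 = (p n).2 := by
    intro n
    have h : ∃ m, (p m).1 = (p n).1 := ⟨n, rfl⟩
    have hc : h.choose = n := hpinj h.choose_spec
    simp only [d, dif_pos h, hc]
  refine ⟨d, fun v => ?_, ?_⟩
  · by_cases h : ∃ n, (p n).1 = v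
    · obtain ⟨n, rfl⟩ := h
      rw [hd]
      exact hmem _ (he _) _ (hpS n)
    · simp only [d, dif_neg h]
      exact hd₀ v
  · rintro _ ⟨i, rfl⟩
    refine Set.infinite_of_injective_forall_mem (f := fun k => p (Nat.pair i k)) ?_ fun k => ?_
    · intro k l hkl
      have := hpinj (congrArg Prod.fst hkl)
      exact (Nat.pair_eq_pair.1 this).2
    · exact ⟨by simpa using hpS (Nat.pair i k), (hd _).symm⟩

/-- Lemma 4.4: the correspondence version of the restriction lemma. `𝒳` is a countable
collection of infinite sets of pairs `(v, c)` with `c ∈ L v` and pairwise distinct first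
coordinates; one can choose sublists of size `ℓ` so that every `X ∈ 𝒳` contains infinitely
many pairs `(v, c)` with `c ∉ L' v`. -/
theorem restrict_sublists_pairs {V C : Type*} [Countable V] (ℓ : ℕ) (hℓ : 1 ≤ ℓ)
    (L : V → Finset C) (hL : ∀ v, (L v).card = ℓ + 1)
    (𝒳 : Set (Set (V × C))) (h𝒳 : 𝒳.Countable)
    (hmem : ∀ X ∈ 𝒳, ∀ p ∈ X, p.2 ∈ L p.1)
    (hinf : ∀ X ∈ 𝒳, X.Infinite)
    (hinj : ∀ X ∈ 𝒳, Set.InjOn Prod.fst X) :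
    ∃ L' : V → Finset C, (∀ v, L' v ⊆ L v) ∧ (∀ v, (L' v).card = ℓ) ∧
      ∀ X ∈ 𝒳, {p ∈ X | p.2 ∉ L' p.1}.Infinite := by
  classical
  obtain ⟨d, hdL, hd⟩ := exists_choice_infinite L
    (fun v => Finset.card_pos.1 (by rw [hL]; omega)) 𝒳 h𝒳 hmem hinf hinj
  refine ⟨fun v => (L v).erase (d v), fun v => Finset.erase_subset _ _, fun v => ?_,
    fun X hX => (hd X hX).mono ?_⟩
  · rw [Finset.card_erase_of_mem (hdL v), hL, Nat.add_sub_cancel]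
  · rintro p ⟨hp, hpd⟩
    exact ⟨hp, by simp [hpd]⟩
end

section
/- For each natural number $k \geq 2$, every finite simple graph is $(1/k)$-majority $k$-correspondence colourable: for every assignment to each vertex $v$ of a list $L(v)$ of $k$ colours and to each edge $uv$ of a set of bad pairs $B_{uv} \subseteq L(u) \times L(v)$ such that each colour of $L(u)$ occurs as the first coordinate of at most one pair of $B_{uv}$ and each colour of $L(v)$ occurs as the second coordinate of at most one pair of $B_{uv}$, there exists a colouring $\chi$ with $\chi(v) \in L(v)$ for every vertex $v$ such that for every vertex $v$, the number of neighbours $u$ of $v$ for which the edge $uv$ is bad (i.e. $(\chi(u), \chi(v)) \in B_{uv}$) is at most $\deg(v)/k$. -/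
/-!
Among all colourings from the lists, take one minimising the number of bad edges (counted here
once in each direction). Recolouring a single vertex `v` only affects the edges at `v`
(`sum_sum_eq_star_add` separates their contribution), so by minimality the number of bad edges at `v` is at most the number obtained
when `v` is given any other colour of `L v`. Since each `B u v` is a matching, each neighbour `u`
of `v` is in conflict with at most one colour of `L v`, so these numbers sum to at most `deg v` over
the `k` colours of `L v`; hence the smallest of them is at most `deg v / k`.
-/

/-- The total of a symmetric weight vanishing on the diagonal is twice the weight at `v` plus the
weight of the pairs avoiding `v`. -/
theorem sum_sum_eq_star_add {V : Type*} [Fintype V] [DecidableEq V] (f : V → V → ℕ)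
    (hsymm : ∀ a b, f a b = f b a) (hdiag : ∀ a, f a a = 0) (v : V) :
    ∑ a, ∑ b, f a b =
      2 * ∑ u, f v u + ∑ a ∈ Finset.univ.erase v, ∑ b ∈ Finset.univ.erase v, f a b := by
  have hstar : ∀ a, ∑ b, f a b = f a v + ∑ b ∈ Finset.univ.erase v, f a b := fun a =>
    (Finset.add_sum_erase _ _ (Finset.mem_univ v)).symm
  have hv : ∑ a ∈ Finset.univ.erase v, f a v = ∑ u, f v u := by
    rw [← Finset.add_sum_erase Finset.univ (fun u => f v u) (Finset.mem_univ v), hdiag, zero_add]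
    exact Finset.sum_congr rfl fun a _ => hsymm a v
  rw [← Finset.add_sum_erase Finset.univ _ (Finset.mem_univ v),
    Finset.sum_congr rfl fun a _ => hstar a, Finset.sum_add_distrib, hv]
  ring

/-- For `k ≥ 2`, every finite simple graph is `(1/k)`-majority `k`-correspondence
colourable: each vertex has a list of `k` colours, each edge `uv` a matching `B u v` of bad
ordered pairs (symmetric between the two orientations of the edge), and there is a colouring
from the lists so that every vertex `v` has at most `deg(v)/k` bad incident edges. -/
theorem finite_frac_majority_correspondence {V C : Type*} [Fintype V] (G : SimpleGraph V)
    [DecidableRel G.Adj] [DecidableEq C] (k : ℕ) (hk : 2 ≤ k)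
    (L : V → Finset C) (hL : ∀ v, (L v).card = k)
    (B : V → V → Finset (C × C))
    (hBsub : ∀ u v, G.Adj u v → ∀ p ∈ B u v, p.1 ∈ L u ∧ p.2 ∈ L v)
    (hBsymm : ∀ u v, G.Adj u v → B v u = (B u v).image Prod.swap)
    (hB1 : ∀ u v, G.Adj u v → ∀ p ∈ B u v, ∀ q ∈ B u v, p.1 = q.1 → p = q)
    (hB2 : ∀ u v, G.Adj u v → ∀ p ∈ B u v, ∀ q ∈ B u v, p.2 = q.2 → p = q) :
    ∃ χ : V → C, (∀ v, χ v ∈ L v) ∧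
      ∀ v, k * ((G.neighborFinset v).filter (fun u => (χ u, χ v) ∈ B u v)).card ≤
        G.degree v := by
  classical
  -- The indicator that `ab` is an edge which is bad under `χ`.
  let f : (V → C) → V → V → ℕ := fun χ a b =>
    if G.Adj a b ∧ (χ b, χ a) ∈ B b a then 1 else 0
  have hsymm : ∀ χ a b, f χ a b = f χ b a := by
    intro χ a b
    refine if_congr ?_ rfl rfl
    rw [G.adj_comm b a]
    refine and_congr_right fun hab => ?_
    rw [hBsymm a b hab]
    simp
  have hdiag : ∀ χ a, f χ a a = 0 := fun χ a => by simp [f]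
  have hcount : ∀ χ v,
      ∑ u, f χ v u = ((G.neighborFinset v).filter (fun u => (χ u, χ v) ∈ B u v)).card := by
    intro χ v
    rw [Finset.sum_boole, Nat.cast_id]
    congr 1
    ext u
    simp
  obtain ⟨χ, hχ, hmin⟩ := Finset.exists_min_image (Fintype.piFinset L)
    (fun χ => ∑ a, ∑ b, f χ a b)
    (Fintype.piFinset_nonempty.2 fun v => Finset.card_pos.1 (by rw [hL]; omega))
  rw [Fintype.mem_piFinset] at hχ
  refine ⟨χ, hχ, fun v => ?_⟩
  rw [← hcount]
  have hle : ∀ c ∈ L v, ∑ u, f χ v u ≤ ∑ u, f (Function.update χ v c) v u := by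
    intro c hc
    have hmem : Function.update χ v c ∈ Fintype.piFinset L := by
      rw [Fintype.mem_piFinset]
      intro a
      rcases eq_or_ne a v with rfl | ha
      · simpa using hc
      · simpa [ha] using hχ a
    have h := hmin _ hmem
    rw [sum_sum_eq_star_add _ (hsymm _) (hdiag _) v,
      sum_sum_eq_star_add _ (hsymm (Function.update χ v c)) (hdiag _) v] at h
    have hrest : ∑ a ∈ Finset.univ.erase v, ∑ b ∈ Finset.univ.erase v,
          f (Function.update χ v c) a b =
        ∑ a ∈ Finset.univ.erase v, ∑ b ∈ Finset.univ.erase v, f χ a b := by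
      refine Finset.sum_congr rfl fun a ha => Finset.sum_congr rfl fun b hb => ?_
      simp only [f, Function.update_of_ne (Finset.ne_of_mem_erase ha),
        Function.update_of_ne (Finset.ne_of_mem_erase hb)]
    omega
  -- A neighbour `u` of `v` conflicts with at most one colour of `v`, as `B u v` is a matching.
  have hone : ∀ u, ∑ c ∈ L v, f (Function.update χ v c) v u ≤ if G.Adj v u then 1 else 0 := by
    intro u
    by_cases huv : G.Adj v u
    · rw [if_pos huv, Finset.sum_boole, Nat.cast_id, Finset.card_le_one]
      intro c hc d hd
      simp only [Finset.mem_filter, huv, true_and, Function.update_self,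
        Function.update_of_ne huv.ne'] at hc hd
      exact congrArg Prod.snd (hB1 u v huv.symm _ hc.2 _ hd.2 rfl)
    · simp [f, huv]
  calc k * ∑ u, f χ v u = ∑ c ∈ L v, ∑ u, f χ v u := by simp [hL]
    _ ≤ ∑ c ∈ L v, ∑ u, f (Function.update χ v c) v u := Finset.sum_le_sum hle
    _ = ∑ u, ∑ c ∈ L v, f (Function.update χ v c) v u := Finset.sum_comm
    _ ≤ ∑ u, if G.Adj v u then 1 else 0 := Finset.sum_le_sum fun u _ => hone u
    _ = G.degree v := by
      rw [Finset.sum_boole, Nat.cast_id, ← G.card_neighborFinset_eq_degree]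
      congr 1
      ext u
      simp
end

section
/- For each natural number $k \geq 2$, every finite acyclic digraph is $(1/k)$-majority $k$-correspondence colourable: for every assignment to each vertex $v$ of a list $L(v)$ of $k$ colours and to each directed edge $(u,v)$ of a set of bad pairs $B_{uv} \subseteq L(u) \times L(v)$ such that each colour of $L(u)$ occurs as the first coordinate of at most one pair of $B_{uv}$ and each colour of $L(v)$ occurs as the second coordinate of at most one pair of $B_{uv}$, there exists a colouring $\chi$ with $\chi(v) \in L(v)$ for every vertex $v$ such that for every vertex $v$, the number of out-neighbours $u$ of $v$ for which the edge $(v,u)$ is bad (i.e. $(\chi(v), \chi(u)) \in B_{vu}$) is at most $d(v)/k$, where $d(v)$ is the out-degree of $v$. -/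
/-!
Colour greedily, sinks first: acyclicity and finiteness make "is an out-neighbour of" well-founded,
so `χ v` may be chosen once all out-neighbours of `v` are coloured. The constraint at `v` involves
only `χ v` and the colours of its out-neighbours. Each coloured out-neighbour `u` makes the edge
`(v, u)` bad for at most one colour of `L v`, so the numbers of bad edges, summed over the `k`
colours of `L v`, total at most `d(v)`; hence some colour causes at most `d(v)/k` of them
(`exists_good_color`).
-/

/-- The pigeonhole step: if each element of `N` is bad for at most one colour of the nonempty list
`S`, then some colour of `S` is bad for at most a `1/|S|` fraction of `N`. -/
theorem exists_good_color {V C : Type*} (S : Finset C) (hS : S.Nonempty) (N : Finset V)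
    (bad : C → V → Prop) [∀ c, DecidablePred (bad c)]
    (h : ∀ u ∈ N, ∀ c ∈ S, ∀ c' ∈ S, bad c u → bad c' u → c = c') :
    ∃ c ∈ S, S.card * (N.filter (bad c)).card ≤ N.card := by
  classical
  have hsum : ∑ c ∈ S, (N.filter (bad c)).card ≤ N.card := by
    rw [← Finset.card_biUnion]
    · exact Finset.card_le_card (Finset.biUnion_subset.2 fun c _ => Finset.filter_subset _ _)
    · intro c hc c' hc' hne
      refine Finset.disjoint_left.2 fun u hu hu' => hne ?_
      rw [Finset.mem_filter] at hu hu'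
      exact h u hu.1 c hc c' hc' hu.2 hu'.2
  obtain ⟨c, hc, hmin⟩ := Finset.exists_min_image S (fun c => (N.filter (bad c)).card) hS
  refine ⟨c, hc, le_trans ?_ hsum⟩
  simpa using Finset.card_nsmul_le_sum S _ _ hmin

/-- For `k ≥ 2`, every finite acyclic digraph is `(1/k)`-majority `k`-correspondence
colourable: with lists of size `k` and a matching `B u v` of bad ordered pairs on each
directed edge `(u, v)`, there is a colouring from the lists so that every vertex `v` has at
most `d(v)/k` out-neighbours `u` with the edge `(v, u)` bad. -/
theorem finite_acyclic_digraph_frac_majority_correspondence {V C : Type*} [Fintype V]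
    (r : V → V → Prop) [DecidableRel r]
    (hacyclic : Irreflexive (Relation.TransGen r))
    [DecidableEq C] (k : ℕ) (hk : 2 ≤ k)
    (L : V → Finset C) (hL : ∀ v, (L v).card = k)
    (B : V → V → Finset (C × C))
    (hBsub : ∀ u v, r u v → ∀ p ∈ B u v, p.1 ∈ L u ∧ p.2 ∈ L v)
    (hB1 : ∀ u v, r u v → ∀ p ∈ B u v, ∀ q ∈ B u v, p.1 = q.1 → p = q)
    (hB2 : ∀ u v, r u v → ∀ p ∈ B u v, ∀ q ∈ B u v, p.2 = q.2 → p = q) :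
    ∃ χ : V → C, (∀ v, χ v ∈ L v) ∧
      ∀ v, k * ((Finset.univ.filter (fun u => r v u)).filter
          (fun u => (χ v, χ u) ∈ B v u)).card ≤
        (Finset.univ.filter (fun u => r v u)).card := by
  classical
  have hwf : WellFounded (fun u v => r v u) := by
    have : Std.Irrefl (Relation.TransGen (fun u v => r v u)) :=
      ⟨fun a h => hacyclic a (Relation.transGen_swap.1 h)⟩
    exact Subrelation.wf (r := Relation.TransGen (fun u v => r v u))
      (fun h => Relation.TransGen.single h)
      (Finite.wellFounded_of_trans_of_irrefl (Relation.TransGen (fun u v => r v u)))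
  have hstep : ∀ (v : V) (f : ∀ u, r v u → C), ∃ c ∈ L v,
      k * ((Finset.univ.filter (fun u => r v u)).filter
        (fun u => ∃ h : r v u, (c, f u h) ∈ B v u)).card ≤
        (Finset.univ.filter (fun u => r v u)).card := by
    intro v f
    have hne : (L v).Nonempty := Finset.card_pos.1 (by rw [hL]; omega)
    obtain ⟨c, hc, hle⟩ := exists_good_color (L v) hne (Finset.univ.filter (fun u => r v u))
      (fun c u => ∃ h : r v u, (c, f u h) ∈ B v u) (by
        rintro u - c - c' - ⟨h, hb⟩ ⟨_, hb'⟩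
        exact congrArg Prod.fst (hB2 v u h _ hb _ hb' rfl))
    exact ⟨c, hc, by rwa [hL] at hle⟩
  choose g hgL hg using hstep
  let χ : V → C := hwf.fix g
  have hχ : ∀ v, χ v = g v (fun u _ => χ u) := fun v => hwf.fix_eq g v
  refine ⟨χ, fun v => hχ v ▸ hgL v _, fun v => ?_⟩
  have hv := hg v (fun u _ => χ u)
  rw [← hχ v] at hv
  refine le_trans (Nat.mul_le_mul_left k (Finset.card_le_card fun u hu => ?_)) hv
  rw [Finset.mem_filter] at hu ⊢
  exact ⟨hu.1, (Finset.mem_filter.1 hu.1).2, hu.2⟩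
end

section
/- For each natural number $k \geq 2$, every countable acyclic digraph is $(1/k)$-majority $(k+1)$-correspondence colourable: for every assignment to each vertex $v$ of a list $L(v)$ of $k+1$ colours and to each directed edge $(u,v)$ of a set of bad pairs $B_{uv} \subseteq L(u) \times L(v)$ such that each colour of $L(u)$ occurs as the first coordinate of at most one pair of $B_{uv}$ and each colour of $L(v)$ occurs as the second coordinate of at most one pair of $B_{uv}$, there exists a colouring $\chi$ with $\chi(v) \in L(v)$ for every vertex $v$ such that every vertex $v$ of finite out-degree $d(v)$ has at most $d(v)/k$ out-neighbours $u$ for which the edge $(v,u)$ is bad (i.e. $(\chi(v), \chi(u)) \in B_{vu}$), and every vertex of infinite out-degree has infinitely many out-neighbours $u$ for which the edge $(v,u)$ is not bad. -/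
/-!
Call a vertex *finite* or *infinite* according to its out-degree.

Since `V` is countable, Hall's theorem provides pairwise disjoint infinite sets of out-neighbours,
one for each infinite vertex (`exists_disjoint_children`); a vertex in the set belonging to `q` is
called a child of `q`. It suffices to colour so that

* every finite vertex has at most `d / k` bad out-edges, and
* the edge from each infinite vertex to each of its children is not bad.

Each of these conditions involves only finitely many vertices, so by compactness
(`exists_colouring_of_local`) it is enough to satisfy those belonging to a finite set of vertices.
That is done greedily: first the infinite vertices, each after its parent, then the finite
vertices, each after its out-neighbours. The greedy step for a finite vertex `v` works because an
out-neighbour of `v` already coloured makes at most one colour of `L v` bad, so the bad counts of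
the `k + 1` colours sum to at most `d`; hence fewer than `k` of them exceed `d / k`, and at least
two colours remain (`card_overloaded_lt`). The parent of `v` excludes at most one of these.
-/

/-- Compactness together with the greedy algorithm: the condition `P v` depends only on the colours
on the finite set `S v`, can always be met by recolouring `v` alone, and every nonempty finite set
`A` has a vertex `v` that can be coloured last, in that no other vertex of `A` has `v` in its
support. Then all the conditions can be met at once. -/
lemma exists_colouring_of_local {V C : Type*} [DecidableEq V] (L : V → Finset C)
    (hne : ∀ v, (L v).Nonempty) (P : V → (V → C) → Prop) (S : V → Set V)
    (hS : ∀ v, (S v).Finite)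
    (hP : ∀ v χ χ', (∀ w ∈ S v, χ w = χ' w) → P v χ → P v χ')
    (hlast : ∀ A : Finset V, A.Nonempty → ∃ v ∈ A, ∀ w ∈ A, w ≠ v → v ∉ S w)
    (hext : ∀ v χ, (∀ u, χ u ∈ L u) → ∃ c ∈ L v, P v (Function.update χ v c)) :
    ∃ χ : V → C, (∀ v, χ v ∈ L v) ∧ ∀ v, P v χ := by
  have hfin : ∀ A : Finset V, ∃ χ : V → C, (∀ v, χ v ∈ L v) ∧ ∀ v ∈ A, P v χ := by
    intro A
    induction A using Finset.strongInduction with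
    | H A ih =>
      rcases A.eq_empty_or_nonempty with rfl | hA
      · exact ⟨fun v => (hne v).choose, fun v => (hne v).choose_spec, by simp⟩
      · obtain ⟨v, hv, hvl⟩ := hlast A hA
        obtain ⟨χ, hχ, hχP⟩ := ih (A.erase v) (Finset.erase_ssubset hv)
        obtain ⟨c, hc, hcP⟩ := hext v χ hχ
        refine ⟨Function.update χ v c, fun u => ?_, fun u hu => ?_⟩
        · by_cases huv : u = v
          · subst huv; simpa using hc
          · simpa [huv] using hχ u
        · by_cases huv : u = v
          · subst huv; exact hcP
          · refine hP u χ _ (fun w hw => ?_) (hχP u (Finset.mem_erase.2 ⟨huv, hu⟩))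
            have hwv : w ≠ v := fun h => hvl u hu huv (h ▸ hw)
            simp [hwv]
  choose X hXL hXP using hfin
  -- The limit of the colourings `X A` along an ultrafilter of increasing finite sets `A`.
  let U : Ultrafilter (Finset V) := Ultrafilter.of Filter.atTop
  have hU : (U : Filter (Finset V)) ≤ Filter.atTop := Ultrafilter.of_le _
  have hlim : ∀ v, ∃ c ∈ L v, ∀ᶠ A in (U : Filter (Finset V)), X A v = c := by
    intro v
    have h : (⋃ c ∈ (L v : Set C), {A | X A v = c}) ∈ U :=
      Filter.mem_of_superset Filter.univ_mem (fun A _ => by simpa using hXL A v)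
    obtain ⟨c, hc, h'⟩ := (Ultrafilter.finite_biUnion_mem_iff (L v).finite_toSet).1 h
    exact ⟨c, hc, h'⟩
  choose χ hχL hχ using hlim
  refine ⟨χ, hχL, fun v => ?_⟩
  have h1 : ∀ᶠ A in (U : Filter (Finset V)), ∀ w ∈ S v, X A w = χ w :=
    (Filter.eventually_all_finite (hS v)).2 fun w _ => hχ w
  have h2 : ∀ᶠ A in (U : Filter (Finset V)), {v} ⊆ A :=
    (Filter.eventually_ge_atTop {v}).filter_mono hU
  obtain ⟨A, hA1, hA2⟩ := (h1.and h2).exists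
  exact hP v (X A) χ hA1 (hXP A v (hA2 (Finset.mem_singleton_self v)))

/-- Countably many infinite sets contain pairwise disjoint infinite subsets, the `i`-th one
enumerated by `f (i, ·)`. -/
lemma exists_disjoint_children {ι V : Type*} [Countable ι] (N : ι → Set V)
    (hN : ∀ i, (N i).Infinite) :
    ∃ f : ι × ℕ → V, Function.Injective f ∧ ∀ x, f x ∈ N x.1 := by
  classical
  obtain ⟨e, he⟩ := exists_injective_nat (ι × ℕ)
  -- Hall's condition holds because the `e x`-th finite set has more than `e x` elements.
  choose t htN htc using fun x : ι × ℕ => (hN x.1).exists_subset_card_eq (e x + 1)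
  obtain ⟨f, hf, hft⟩ := (Finset.all_card_le_biUnion_card_iff_exists_injective t).1 (by
    intro s
    rcases s.eq_empty_or_nonempty with rfl | hs
    · simp
    · obtain ⟨m, hm, hmax⟩ := s.exists_max_image e hs
      calc s.card = (s.image e).card := (Finset.card_image_of_injective s he).symm
        _ ≤ (Finset.range (e m + 1)).card := by
          refine Finset.card_le_card fun y hy => ?_
          obtain ⟨x, hx, rfl⟩ := Finset.mem_image.1 hy
          exact Finset.mem_range.2 (Nat.lt_succ_of_le (hmax x hx))
        _ = (t m).card := by rw [htc, Finset.card_range]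
        _ ≤ (s.biUnion t).card := Finset.card_le_card (Finset.subset_biUnion_of_mem t hm))
  exact ⟨f, hf, fun x => htN x (hft x)⟩

/-- Among disjoint subsets `b c` of `N`, fewer than `k` have more than `|N| / k` elements. -/
lemma card_overloaded_lt {V C : Type*} [DecidableEq V] (N : Finset V) (b : C → Finset V)
    (T : Finset C) (k : ℕ) (hk : 0 < k) (hbN : ∀ c, b c ⊆ N)
    (hdisj : ∀ c c', c ≠ c' → Disjoint (b c) (b c'))
    (hT : ∀ c ∈ T, N.card < k * (b c).card) : T.card < k := by
  have h1 : ∑ c ∈ T, (b c).card ≤ N.card := by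
    rw [← Finset.card_biUnion fun c _ c' _ h => hdisj c c' h]
    exact Finset.card_le_card (Finset.biUnion_subset.2 fun c _ => hbN c)
  have h2 : T.card * (N.card + 1) ≤ k * ∑ c ∈ T, (b c).card := by
    rw [Finset.mul_sum, ← smul_eq_mul]
    exact Finset.card_nsmul_le_sum T _ _ fun c hc => hT c hc
  by_contra! h
  nlinarith [Nat.mul_le_mul_left k h1, Nat.mul_le_mul_right (N.card + 1) h]

lemma exists_sink {V : Type*} (r : V → V → Prop) (hr : ∀ v, ¬ Relation.TransGen r v v)
    (A : Set V) (hA : A.Finite) (hne : A.Nonempty) : ∃ v ∈ A, ∀ w ∈ A, ¬ r v w := by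
  have : IsStrictOrder V (Function.swap (Relation.TransGen r)) :=
    { irrefl := hr, trans := fun _ _ _ h h' => h'.trans h }
  obtain ⟨v, hv, h⟩ := (hA.wellFoundedOn (r := Function.swap (Relation.TransGen r))).has_min
    Set.univ ⟨⟨_, hne.some_mem⟩, trivial⟩
  exact ⟨v, v.2, fun w hw hvw => h ⟨w, hw⟩ trivial (Relation.TransGen.single hvw)⟩

lemma exists_source_s16 {V : Type*} (r : V → V → Prop) (hr : ∀ v, ¬ Relation.TransGen r v v)
    (A : Set V) (hA : A.Finite) (hne : A.Nonempty) : ∃ v ∈ A, ∀ w ∈ A, ¬ r w v :=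
  exists_sink (Function.swap r) (fun v h => hr v (Relation.transGen_swap.1 h)) A hA hne

/-- Theorem 4.5 (digraph case): for `k ≥ 2`, every countable acyclic digraph is
`(1/k)`-majority `(k+1)`-correspondence colourable. -/
theorem countable_acyclic_digraph_frac_majority_correspondence {V C : Type*} [Countable V]
    (r : V → V → Prop) (hacyclic : Irreflexive (Relation.TransGen r))
    (k : ℕ) (hk : 2 ≤ k)
    (L : V → Finset C) (hL : ∀ v, (L v).card = k + 1)
    (B : V → V → Set (C × C))
    (hBsub : ∀ u v, r u v → ∀ p ∈ B u v, p.1 ∈ L u ∧ p.2 ∈ L v)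
    (hB1 : ∀ u v, r u v → ∀ p ∈ B u v, ∀ q ∈ B u v, p.1 = q.1 → p = q)
    (hB2 : ∀ u v, r u v → ∀ p ∈ B u v, ∀ q ∈ B u v, p.2 = q.2 → p = q) :
    ∃ χ : V → C, (∀ v, χ v ∈ L v) ∧
      (∀ v, {u | r v u}.Finite →
        k * {u | r v u ∧ (χ v, χ u) ∈ B v u}.ncard ≤ {u | r v u}.ncard) ∧
      (∀ v, {u | r v u}.Infinite → {u | r v u ∧ (χ v, χ u) ∉ B v u}.Infinite) := by
  classical
  have hirr : ∀ v, ¬ r v v := fun v h => hacyclic v (Relation.TransGen.single h)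
  obtain ⟨f, hf, hfr⟩ := exists_disjoint_children
    (fun q : {q : V // {u | r q u}.Infinite} => {u | r q u}) (fun q => q.2)
  refine (exists_colouring_of_local L
    (fun v => Finset.card_pos.1 (by rw [hL]; omega))
    (fun v χ => ({u | r v u}.Finite →
        k * {u | r v u ∧ (χ v, χ u) ∈ B v u}.ncard ≤ {u | r v u}.ncard) ∧
      ∀ x, f x = v → (χ x.1, χ v) ∉ B x.1 v)
    (fun v => {v} ∪ {w | {u | r v u}.Finite ∧ r v w} ∪ {w | ∃ x, f x = v ∧ (x.1 : V) = w})
    ?_ ?_ ?_ ?_).elim fun χ ⟨hχL, hχ⟩ => ?_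
  · intro v
    refine ((Set.finite_singleton v).union ?_).union ?_
    · by_cases h : {u | r v u}.Finite
      · exact h.subset fun w hw => hw.2
      · simp [h]
    · refine Set.Subsingleton.finite ?_
      rintro _ ⟨x, hx, rfl⟩ _ ⟨y, hy, rfl⟩
      rw [hf (hx.trans hy.symm)]
  · intro v χ χ' h ⟨h1, h2⟩
    have hv : χ v = χ' v := h v (Or.inl (Or.inl rfl))
    refine ⟨fun hfin => ?_, fun x hx => ?_⟩
    · have : {u | r v u ∧ (χ' v, χ' u) ∈ B v u} = {u | r v u ∧ (χ v, χ u) ∈ B v u} := by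
        ext u
        refine and_congr_right fun hu => ?_
        rw [hv, h u (Or.inl (Or.inr ⟨hfin, hu⟩))]
      rw [this]
      exact h1 hfin
    · rw [← hv, ← h x.1 (Or.inr ⟨x, hx, rfl⟩)]
      exact h2 x hx
  · intro A hA
    by_cases hfin : ∃ v ∈ A, {u | r v u}.Finite
    · -- Finite vertices come after all infinite ones, with out-neighbours before in-neighbours.
      obtain ⟨v₀, hv₀, hv₀f⟩ := hfin
      obtain ⟨v, ⟨hvA, hvf⟩, hv⟩ := exists_source_s16 r hacyclic {v | v ∈ A ∧ {u | r v u}.Finite}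
        (A.finite_toSet.subset fun v hv => hv.1) ⟨v₀, hv₀, hv₀f⟩
      refine ⟨v, hvA, fun w hw hwv => ?_⟩
      rintro ((h | ⟨hwf, h⟩) | ⟨x, -, h⟩)
      · exact hwv h.symm
      · exact hv w ⟨hw, hwf⟩ h
      · exact x.1.2 (h ▸ hvf)
    · -- Infinite vertices are coloured parents first.
      push Not at hfin
      obtain ⟨v, hvA, hv⟩ := exists_sink r hacyclic A A.finite_toSet hA
      refine ⟨v, hvA, fun w hw hwv => ?_⟩
      rintro ((h | ⟨hwf, h⟩) | ⟨x, hx, h⟩)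
      · exact hwv h.symm
      · exact hfin w hw hwf
      · exact hv w hw (by rw [← h, ← hx]; exact hfr x)
  · intro v χ hχ
    -- The colours excluded by the bad-count condition and by the parent, respectively.
    let T := (L v).filter fun c => ∃ h : {u | r v u}.Finite,
      h.toFinset.card < k * (h.toFinset.filter fun u => (c, χ u) ∈ B v u).card
    let F := (L v).filter fun c => ∃ x, f x = v ∧ (χ x.1, c) ∈ B x.1 v
    have hT : T.card < k := by
      by_cases h : {u | r v u}.Finite
      · refine card_overloaded_lt h.toFinset
          (fun c => h.toFinset.filter fun u => (c, χ u) ∈ B v u) T k (by omega)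
          (fun c => Finset.filter_subset _ _) (fun c c' hcc => ?_) (fun c hc => ?_)
        · rw [Finset.disjoint_left]
          intro u hu hu'
          simp only [Finset.mem_filter, Set.Finite.mem_toFinset, Set.mem_ofPred_eq] at hu hu'
          exact hcc (congrArg Prod.fst (hB2 v u hu.1 _ hu.2 _ hu'.2 rfl))
        · exact (Finset.mem_filter.1 hc).2.2
      · have : T = ∅ := Finset.filter_eq_empty_iff.2 fun c _ hc => h hc.1
        rw [this, Finset.card_empty]
        omega
    have hF : F.card ≤ 1 := by
      refine Finset.card_le_one.2 fun c hc c' hc' => ?_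
      obtain ⟨-, x, hx, hxB⟩ := Finset.mem_filter.1 hc
      obtain ⟨-, y, hy, hyB⟩ := Finset.mem_filter.1 hc'
      obtain rfl := hf (hx.trans hy.symm)
      exact congrArg Prod.snd (hB1 x.1 v (by rw [← hx]; exact hfr x) _ hxB _ hyB rfl)
    obtain ⟨c, hcL, hc⟩ : ∃ c ∈ L v, c ∉ T ∪ F := by
      refine Finset.exists_mem_notMem_of_card_lt_card ?_
      have := Finset.card_union_le T F
      rw [hL]
      omega
    rw [Finset.mem_union, not_or] at hc
    refine ⟨c, hcL, fun hfin => ?_, fun x hx hB => ?_⟩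
    · have hset : {u | r v u ∧ (Function.update χ v c v, Function.update χ v c u) ∈ B v u} =
          (hfin.toFinset.filter fun u => (c, χ u) ∈ B v u : Finset V) := by
        ext u
        simp only [Finset.coe_filter, Set.Finite.mem_toFinset, Set.mem_ofPred_eq]
        refine and_congr_right fun hu => ?_
        have : u ≠ v := fun h => hirr v (h ▸ hu)
        simp [this]
      rw [hset, Set.ncard_coe_finset, Set.ncard_eq_toFinset_card _ hfin]
      by_contra! hlt
      exact hc.1 (Finset.mem_filter.2 ⟨hcL, hfin, hlt⟩)
    · have hne : (x.1 : V) ≠ v := fun h => hirr v (by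
        have := hfr x
        rw [hx] at this
        exact h ▸ this)
      rw [Function.update_self, Function.update_of_ne hne] at hB
      exact hc.2 (Finset.mem_filter.2 ⟨hcL, x, hx, hB⟩)
  · refine ⟨χ, hχL, fun v => (hχ v).1, fun v hv => ?_⟩
    have hinj : Function.Injective fun n => f (⟨v, hv⟩, n) := fun m n h => by
      simpa using hf h
    refine (Set.infinite_range_of_injective hinj).mono ?_
    rintro _ ⟨n, rfl⟩
    exact ⟨hfr (⟨v, hv⟩, n), (hχ _).2 (⟨v, hv⟩, n) rfl⟩
end
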